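/- Let f ∈ ℬ be convenient and Newton nondegenerate with Newton polytope P, and assume that every face Δ ∈ ℱ(P) of dimension ≤ n−1 is a simplex. Then for every α ∈ ℚ one has dim_ℂ gr^𝒩_α(ℬ/ℒ) = Σ_{q=0}^{n−1} Σ_{Δ ∈ ℱ(P), dim Δ = q} Σ_{j=0}^{n−1−q} (−1)^{n−1−q−j} · binom(n−1−q, j) · card{v ∈ Box(Δ) ∩ ℕⁿ : ν(v) = α − j} (equality in ℤ). Equivalently, the Hilbert–Poincaré series of gr^𝒩(ℬ/ℒ) equals Σ_{q=0}^{n−1} Σ_{Δ ∈ ℱ(P), dim Δ = q} (z−1)^{n−1−q} Σ_{v ∈ Box(Δ) ∩ ℕⁿ} z^{ν(v)}. -/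

import Mathlib

open MvPolynomial

namespace ToricNewton

section
variable {σ : Type*} [Fintype σ] [DecidableEq σ]

/-- Coercion of a lattice point of `ℕ^σ` into `ℝ^σ`. -/
def natToR (v : σ → ℕ) : σ → ℝ := fun i => (v i : ℝ)

/-- Coercion of an exponent (finitely supported) into `ℝ^σ`. -/
def toR (m : σ →₀ ℕ) : σ → ℝ := fun i => (m i : ℝ)

/-- The Newton polytope of a polynomial: the convex hull of `{0} ∪ supp f`. -/
noncomputable def newtonPolytope (f : MvPolynomial σ ℂ) : Set (σ → ℝ) :=
  convexHull ℝ ({0} ∪ (toR '' (f.support : Set (σ →₀ ℕ))))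

/-- The Newton function `ν`, which for a convenient polynomial is the gauge
(Minkowski functional) of the Newton polytope. -/
noncomputable def nu (f : MvPolynomial σ ℂ) (x : σ → ℝ) : ℝ :=
  gauge (newtonPolytope f) x

/-- `f` is convenient if for each variable `i` some pure power `uᵢ^k`, `k ≥ 1`,
occurs in `f` with nonzero coefficient. -/
def Convenient (f : MvPolynomial σ ℂ) : Prop :=
  ∀ i : σ, ∃ k : ℕ, 1 ≤ k ∧ f.coeff (Finsupp.single i k) ≠ 0

/-- `Δ` is a (nonempty exposed) closed face of `P`. -/
def IsFace (P Δ : Set (σ → ℝ)) : Prop :=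
  Δ.Nonempty ∧ ∃ (l : (σ → ℝ) →ₗ[ℝ] ℝ) (c : ℝ),
    (∀ x ∈ P, l x ≤ c) ∧ Δ = {x ∈ P | l x = c}

/-- A face of the Newton boundary: a closed face of the Newton polytope not
containing the origin. -/
def NBFace (f : MvPolynomial σ ℂ) (Δ : Set (σ → ℝ)) : Prop :=
  IsFace (newtonPolytope f) Δ ∧ (0 : σ → ℝ) ∉ Δ

open Classical in
/-- The truncation `g_Δ` of `g` to the monomials whose exponents lie in `Δ`. -/
noncomputable def faceRestrict (Δ : Set (σ → ℝ)) (g : MvPolynomial σ ℂ) : MvPolynomial σ ℂ :=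
  ∑ m ∈ g.support, if toR m ∈ Δ then monomial m (g.coeff m) else 0

/-- `f` is Newton nondegenerate: for every closed face `Δ` of the Newton boundary
the system `(u₁ ∂f/∂u₁)_Δ = ⋯ = (uₙ ∂f/∂uₙ)_Δ = 0` has no solution in `(ℂ*)ⁿ`. -/
def Nondegenerate (f : MvPolynomial σ ℂ) : Prop :=
  ∀ Δ : Set (σ → ℝ), NBFace f Δ →
    ¬ ∃ x : σ → ℂ, (∀ i, x i ≠ 0) ∧
        ∀ i, eval x (faceRestrict Δ (X i * pderiv i f)) = 0

/-- The ideal `ℒ` generated by the `uᵢ ∂f/∂uᵢ`. -/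
noncomputable def LIdeal (f : MvPolynomial σ ℂ) : Ideal (MvPolynomial σ ℂ) :=
  Ideal.span (Set.range fun i => X i * pderiv i f)

/-- The Jacobian ideal `ℐ` generated by the `∂f/∂uᵢ`. -/
noncomputable def IIdeal (f : MvPolynomial σ ℂ) : Ideal (MvPolynomial σ ℂ) :=
  Ideal.span (Set.range fun i => pderiv i f)

/-- The Newton filtration `𝒩_α ℬ`: the span of the monomials `u^m` with `ν(m) ≤ α`. -/
noncomputable def Nle (f : MvPolynomial σ ℂ) (α : ℝ) : Submodule ℂ (MvPolynomial σ ℂ) where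
  carrier := {g | ∀ m ∈ g.support, nu f (toR m) ≤ α}
  zero_mem' := by simp
  add_mem' := by
    intro a b ha hb m hm
    rcases Finset.mem_union.mp (MvPolynomial.support_add hm) with h | h
    · exact ha m h
    · exact hb m h
  smul_mem' := by
    intro c a ha m hm
    exact ha m (MvPolynomial.support_smul hm)

/-- The filtration `𝒩_{<α} ℬ`. -/
noncomputable def Nlt (f : MvPolynomial σ ℂ) (α : ℝ) : Submodule ℂ (MvPolynomial σ ℂ) where
  carrier := {g | ∀ m ∈ g.support, nu f (toR m) < α}
  zero_mem' := by simp
  add_mem' := by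
    intro a b ha hb m hm
    rcases Finset.mem_union.mp (MvPolynomial.support_add hm) with h | h
    · exact ha m h
    · exact hb m h
  smul_mem' := by
    intro c a ha m hm
    exact ha m (MvPolynomial.support_smul hm)

/-- The twisted filtration `W_α ℬ`: the span of the monomials `u^m` with
`ν(m + (1,…,1)) ≤ α`. -/
noncomputable def Wle (f : MvPolynomial σ ℂ) (α : ℝ) : Submodule ℂ (MvPolynomial σ ℂ) where
  carrier := {g | ∀ m ∈ g.support, nu f (toR m + 1) ≤ α}
  zero_mem' := by simp
  add_mem' := by
    intro a b ha hb m hm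
    rcases Finset.mem_union.mp (MvPolynomial.support_add hm) with h | h
    · exact ha m h
    · exact hb m h
  smul_mem' := by
    intro c a ha m hm
    exact ha m (MvPolynomial.support_smul hm)

/-- The twisted filtration `W_{<α} ℬ`. -/
noncomputable def Wlt (f : MvPolynomial σ ℂ) (α : ℝ) : Submodule ℂ (MvPolynomial σ ℂ) where
  carrier := {g | ∀ m ∈ g.support, nu f (toR m + 1) < α}
  zero_mem' := by simp
  add_mem' := by
    intro a b ha hb m hm
    rcases Finset.mem_union.mp (MvPolynomial.support_add hm) with h | h
    · exact ha m h
    · exact hb m h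
  smul_mem' := by
    intro c a ha m hm
    exact ha m (MvPolynomial.support_smul hm)

/-- The graded piece `gr^𝒩_α(ℬ/ℒ) = (𝒩_α ℬ + ℒ)/(𝒩_{<α} ℬ + ℒ)`, realized as the
image of `𝒩_α ℬ + ℒ` in `ℬ/(𝒩_{<α} ℬ + ℒ)`. -/
noncomputable def grN (f : MvPolynomial σ ℂ) (α : ℝ) :
    Submodule ℂ (MvPolynomial σ ℂ ⧸ (Nlt f α ⊔ (LIdeal f).restrictScalars ℂ)) :=
  Submodule.map (Nlt f α ⊔ (LIdeal f).restrictScalars ℂ).mkQ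
    (Nle f α ⊔ (LIdeal f).restrictScalars ℂ)

/-- `dim_ℂ gr^𝒩_α(ℬ/ℒ)`. -/
noncomputable def grDim (f : MvPolynomial σ ℂ) (α : ℝ) : ℕ :=
  Module.finrank ℂ (grN f α)

/-- The graded piece `gr^W_α(ℬ/ℐ) = (W_α ℬ + ℐ)/(W_{<α} ℬ + ℐ)`. -/
noncomputable def grW (f : MvPolynomial σ ℂ) (α : ℝ) :
    Submodule ℂ (MvPolynomial σ ℂ ⧸ (Wlt f α ⊔ (IIdeal f).restrictScalars ℂ)) :=
  Submodule.map (Wlt f α ⊔ (IIdeal f).restrictScalars ℂ).mkQ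
    (Wle f α ⊔ (IIdeal f).restrictScalars ℂ)

/-- `dim_ℂ gr^W_α(ℬ/ℐ)`. -/
noncomputable def grWDim (f : MvPolynomial σ ℂ) (α : ℝ) : ℕ :=
  Module.finrank ℂ (grW f α)

/-- The dimension of a face, i.e. of the direction of its affine span. -/
noncomputable def faceDim (Δ : Set (σ → ℝ)) : ℕ :=
  Module.finrank ℝ (affineSpan ℝ Δ).direction

/-- `Δ` is a simplex: the convex hull of an affinely independent family. -/
def IsSimplex (Δ : Set (σ → ℝ)) : Prop :=
  ∃ (k : ℕ) (p : Fin (k + 1) → (σ → ℝ)), AffineIndependent ℝ p ∧ Δ = convexHull ℝ (Set.range p)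

/-- The union of the coordinate hyperplanes. -/
def coordHyperplanes (σ : Type*) : Set (σ → ℝ) := ⋃ i : σ, {x : σ → ℝ | x i = 0}

/-- `Box(Δ)`: the set of combinations `Σ q_ℓ b_ℓ`, `q_ℓ ∈ [0,1)`, of the vertices
(extreme points) of `Δ`. -/
def Box (Δ : Set (σ → ℝ)) : Set (σ → ℝ) :=
  {x | ∃ s : Finset (σ → ℝ), ↑s ⊆ Δ.extremePoints ℝ ∧
      ∃ q : (σ → ℝ) → ℝ, (∀ b ∈ s, 0 ≤ q b ∧ q b < 1) ∧ x = ∑ b ∈ s, q b • b}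

/-- `Δ ∈ ℱ(P)`: a closed face of the Newton polytope of `f` not contained in the
union of the coordinate hyperplanes. -/
def FcalMem (f : MvPolynomial σ ℂ) (Δ : Set (σ → ℝ)) : Prop :=
  IsFace (newtonPolytope f) Δ ∧ ¬ Δ ⊆ coordHyperplanes σ

/-- `Box(P)`: the union of `Box(Δ)` over the closed faces of the Newton boundary
not contained in the union of the coordinate hyperplanes. -/
def BoxP (f : MvPolynomial σ ℂ) : Set (σ → ℝ) :=
  ⋃ Δ ∈ {Δ : Set (σ → ℝ) | NBFace f Δ ∧ ¬ Δ ⊆ coordHyperplanes σ}, Box Δ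

/-- The cone `ℝ₊·Δ` over `Δ`. -/
def cone0 (Δ : Set (σ → ℝ)) : Set (σ → ℝ) :=
  {x | ∃ t : ℝ, 0 ≤ t ∧ ∃ y ∈ Δ, x = t • y}

/-- The restriction of `f` obtained by setting the variables in `S` to zero. -/
noncomputable def restrictZero (S : Finset σ) (f : MvPolynomial σ ℂ) :
    MvPolynomial {j : σ // j ∉ S} ℂ :=
  aeval (fun j : σ => if h : j ∉ S then X (⟨j, h⟩ : {j : σ // j ∉ S}) else 0) f

end

end ToricNewton

/-!
Scalar combinations of the logarithmic derivatives `uᵢ ∂f/∂uᵢ` are shown to form a regular sequence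
which is strict for the Newton filtration. Then `dim gr^𝒩_α(ℬ/ℒ)` is the `n`-th finite difference
of the number of lattice points of given Newton weight.

Since the faces in `ℱ(P)` are simplices, the cones over the facets of the Newton boundary form a
simplicial fan. A generic positive vector `w` assigns to each lattice point `v` the unique facet
`M` whose cone contains `v + ε w` for all small `ε > 0`. Refining the Newton weight of `v` by the
value at `w` of the functional `u_M` splits the graded ring into one piece for each facet. On the
piece of `M`, in coordinates adapted to the cone over `M`, the symbols of the logarithmic
derivatives act as multiplication by forms which, by nondegeneracy, vanish simultaneously only at
the origin. A generic linear combination then works for all facets at once.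

The lattice points are finally counted by inclusion and exclusion: those attributed to `M` are
distributed over the faces of `M` which contain every vertex in whose direction `w` has positive
coordinate. These faces are exactly the elements of `ℱ(P)` of dimension less than `n`, and
differencing the count of the cone over a simplex once for each vertex leaves its box.
-/

namespace ToricNewton

/-! ### Generic linear combinations form regular sequences -/

section RegularSequences

open CategoryTheory Abelian RingTheory.Sequence

universe u

section Ext

variable {R : Type u} [CommRing R]

lemma subsingleton_ext_quotSMulTop {N : ModuleCat.{u} R} {M : Type u} [AddCommGroup M]
    [Module R M] {r : R} (hr : IsSMulRegular M r) {n : ℕ}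
    (hext : ∀ i < n + 1, Subsingleton (Ext N (ModuleCat.of R M) i)) :
    ∀ i < n, Subsingleton (Ext N (ModuleCat.of R (QuotSMulTop r M)) i) := by
  intro i hi
  have zero₁ := AddCommGrpCat.isZero_of_iff_subsingleton.mpr (hext i (by omega))
  have zero₂ := AddCommGrpCat.isZero_of_iff_subsingleton.mpr (hext (i + 1) (by omega))
  have hr' : IsSMulRegular (ModuleCat.of R M) r := hr
  exact AddCommGrpCat.subsingleton_of_isZero <| ShortComplex.Exact.isZero_of_both_zeros
    (Ext.covariant_sequence_exact₃' N hr'.smulShortComplex_shortExact i (i + 1) rfl)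
    (zero₁.eq_zero_of_src _) (zero₂.eq_zero_of_tgt _)

lemma subsingleton_linearMap_quotient_ofList (N : ModuleCat.{u} R) {rs : List R} :
    ∀ {n : ℕ} {M : Type u} [AddCommGroup M] [Module R M], rs.length < n →
      (∀ i < n, Subsingleton (Ext N (ModuleCat.of R M) i)) → IsWeaklyRegular M rs →
      Subsingleton (N →ₗ[R] M ⧸ (Ideal.ofList rs • ⊤ : Submodule R M)) := by
  induction rs with
  | nil =>
    intro n M _ _ hn hext _
    have h₀ : Subsingleton (N ⟶ ModuleCat.of R M) :=
      Ext.addEquiv₀.subsingleton_congr.mp (hext 0 (by simpa using hn))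
    have h₁ : Subsingleton (N →ₗ[R] M) :=
      (ModuleCat.homAddEquiv (M := N) (N := ModuleCat.of R M)).symm.subsingleton
    have e : (M ⧸ (Ideal.ofList ([] : List R) • ⊤ : Submodule R M)) ≃ₗ[R] M :=
      Submodule.quotEquivOfEqBot _ (by simp)
    exact (LinearEquiv.congrRight (M := N) e).toEquiv.subsingleton
  | cons r rs ih =>
    intro n M _ _ hn hext hreg
    obtain ⟨k, rfl⟩ : ∃ k, n = k + 1 := ⟨n - 1, by omega⟩
    rw [isWeaklyRegular_cons_iff] at hreg
    have := ih (by simpa using hn) (subsingleton_ext_quotSMulTop hreg.1 hext) hreg.2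
    exact (LinearEquiv.congrRight (M := N)
      (Submodule.quotOfListConsSMulTopEquivQuotSMulTopInner M r rs)).toEquiv.subsingleton

variable [IsNoetherianRing R] {M : Type u} [AddCommGroup M] [Module R M] [Module.Finite R M]
  {rs xs : List R}

lemma eq_zero_of_smul_eq_zero_of_length_lt (hrs : IsWeaklyRegular M rs) (hxs : IsRegular M xs)
    (hlen : rs.length < xs.length) {m : M ⧸ (Ideal.ofList rs • ⊤ : Submodule R M)}
    (hm : ∀ x ∈ xs, x • m = 0) : m = 0 := by
  set I := Ideal.ofList xs
  have hext := ModuleCat.subsingleton_ext_of_exists_isRegular I (ModuleCat.of R (R ⧸ I))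
    (by rw [Module.support_eq_zeroLocus, Ideal.annihilator_quotient]) (ModuleCat.of R M)
    (lt_of_le_of_ne le_top hxs.top_ne_smul.symm) xs (fun _ hx => Ideal.subset_span hx) hxs
  have := subsingleton_linearMap_quotient_ofList (ModuleCat.of R (R ⧸ I)) hlen hext hrs
  have hI : I ≤ (LinearMap.toSpanSingleton R _ m).ker := Ideal.span_le.mpr fun x hx => hm x hx
  let φ : (R ⧸ I) →ₗ[R] M ⧸ (Ideal.ofList rs • ⊤ : Submodule R M) := Submodule.liftQ I _ hI
  have hφ : φ = 0 := Subsingleton.elim (α := ModuleCat.of R (R ⧸ I) →ₗ[R] _) φ 0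
  calc m = φ (Submodule.Quotient.mk 1) := (one_smul R m).symm
    _ = 0 := by rw [hφ, LinearMap.zero_apply]

lemma exists_notMem_of_mem_associatedPrimes (hrs : IsWeaklyRegular M rs) (hxs : IsRegular M xs)
    (hlen : rs.length < xs.length) {p : Ideal R}
    (hp : p ∈ associatedPrimes R (M ⧸ (Ideal.ofList rs • ⊤ : Submodule R M))) :
    ∃ x ∈ xs, x ∉ p := by
  by_contra! hxp
  obtain ⟨hprime, m, rfl⟩ := isAssociatedPrime_iff.mp hp
  have hm : m = 0 := eq_zero_of_smul_eq_zero_of_length_lt hrs hxs hlen fun x hx => by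
    simpa [Submodule.mem_colon_singleton] using hxp x hx
  refine hprime.ne_top ?_
  rw [hm, Ideal.eq_top_iff_one, Submodule.mem_colon_singleton, smul_zero]
  rfl

end Ext

lemma isRegular_X (R : Type*) [CommRing R] [Nontrivial R] (n : ℕ) :
    IsRegular (MvPolynomial (Fin n) R) (List.ofFn (X : Fin n → MvPolynomial (Fin n) R)) := by
  have htake (i : ℕ) : (Ideal.ofList ((List.ofFn (X : Fin n → MvPolynomial (Fin n) R)).take i) •
      (⊤ : Ideal (MvPolynomial (Fin n) R))) = Ideal.span (X '' {j : Fin n | (j : ℕ) < i}) := by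
    rw [smul_eq_mul, Ideal.mul_top, Ideal.ofList]
    congr 1
    ext r
    simp only [List.mem_take_iff_getElem, Set.mem_ofPred_eq, Set.mem_image, List.getElem_ofFn,
      List.length_ofFn, lt_inf_iff]
    exact ⟨fun ⟨j, hj, h⟩ => ⟨⟨j, hj.2⟩, hj.1, h⟩, fun ⟨j, hj, h⟩ => ⟨j, ⟨hj, j.2⟩, h⟩⟩
  refine ⟨⟨fun i hi => ?_⟩, ?_⟩
  · rw [isSMulRegular_quotient_iff_mem_of_smul_mem, htake, List.getElem_ofFn]
    intro g hg
    rw [mem_ideal_span_X_image] at hg ⊢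
    intro m hm
    set k : Fin n := ⟨i, by simpa using hi⟩
    obtain ⟨j, hj, hmj⟩ := hg (m + Finsupp.single k 1) <| by
      rwa [smul_eq_mul, mul_comm, mem_support_iff, coeff_mul_X, ← mem_support_iff]
    have hkj : k ≠ j := fun h => hj.ne (congrArg Fin.val h).symm
    exact ⟨j, hj, by simpa [Finsupp.single_apply, hkj] using hmj⟩
  · have h := htake n
    rw [List.take_of_length_le (by simp)] at h
    rw [h, ne_comm, Ideal.ne_top_iff_one, mem_ideal_span_X_image]
    simp

lemma X_mem_of_zeroLocus_subset_zero {K σ : Type*} [Field K] [IsAlgClosed K] [Finite σ]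
    {ι : Type*} {F : ι → MvPolynomial σ K} (hF : ∀ x, (∀ i, eval x (F i) = 0) → x = 0)
    {p : Ideal (MvPolynomial σ K)} (hp : p.IsPrime) (hFp : ∀ i, F i ∈ p) (j : σ) : X j ∈ p := by
  have hle : Ideal.span (Set.range F) ≤ p := Ideal.span_le.mpr (Set.range_subset_iff.mpr hFp)
  refine hp.radical_le_iff.mpr hle ?_
  rw [← vanishingIdeal_zeroLocus_eq_radical (K := K), mem_vanishingIdeal_iff]
  intro x hx
  have hx₀ : x = 0 := hF x fun i => by
    simpa [aeval_eq_eval] using mem_zeroLocus_iff.mp hx (F i) (Ideal.subset_span ⟨i, rfl⟩)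
  simp [hx₀]

section PrefixIdeal

variable {R : Type*} [CommRing R] (L : ℕ → R)

/-- The ideal generated by the first `k` terms of the sequence `L`. -/
def prefixIdeal (k : ℕ) : Ideal R := Ideal.span (L '' Set.Iio k)

lemma ofList_map_range (k : ℕ) : Ideal.ofList ((List.range k).map L) = prefixIdeal L k := by
  rw [Ideal.ofList, prefixIdeal]
  congr 1
  ext r
  simp

variable {L}

lemma mem_prefixIdeal_of_mul_mem {n k : ℕ} (hreg : IsWeaklyRegular R ((List.range n).map L))
    (hk : k < n) {g : R} (hg : L k * g ∈ prefixIdeal L k) : g ∈ prefixIdeal L k := by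
  have h := hreg.regular_mod_prev k (by simpa using hk)
  rw [isSMulRegular_quotient_iff_mem_of_smul_mem, ← List.map_take, List.take_range,
    ofList_map_range, min_eq_left hk.le, smul_eq_mul, Ideal.mul_top] at h
  exact h g (by simpa using hg)

end PrefixIdeal

section GenericCombinations

variable {K : Type u} [Field K] [IsAlgClosed K] {n : ℕ}

lemma exists_notMem_and_isSMulRegular {ι : Type*} [Finite ι]
    {F : ι → Fin n → MvPolynomial (Fin n) K}
    (hF : ∀ M x, (∀ i, eval x (F M i) = 0) → x = 0) {rs : ι → List (MvPolynomial (Fin n) K)}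
    (hrs : ∀ M, IsWeaklyRegular (MvPolynomial (Fin n) K) (rs M)) (hlen : ∀ M, (rs M).length < n)
    {V : Submodule K (Fin n → K)} (hV : V ≠ ⊤) :
    ∃ c ∉ V, ∀ M, IsSMulRegular
      (MvPolynomial (Fin n) K ⧸ (Ideal.ofList (rs M) • ⊤ : Ideal (MvPolynomial (Fin n) K)))
      (Fintype.linearCombination K (F M) c) := by
  let R := MvPolynomial (Fin n) K
  let primes (M : ι) : Set (Ideal R) :=
    associatedPrimes R (R ⧸ (Ideal.ofList (rs M) • ⊤ : Ideal R))
  let bad (M : ι) (p : Ideal R) : Submodule K (Fin n → K) :=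
    (p.restrictScalars K).comap (Fintype.linearCombination K (F M))
  have hbad {M : ι} {p : Ideal R} (hp : p ∈ primes M) : bad M p ≠ ⊤ := by
    intro htop
    have hFp (i : Fin n) : F M i ∈ p := by
      have : Pi.single i 1 ∈ bad M p := htop ▸ Submodule.mem_top
      simpa [bad] using this
    obtain ⟨x, hx, hxp⟩ := exists_notMem_of_mem_associatedPrimes (hrs M) (isRegular_X K n)
      (by simpa using hlen M) hp
    obtain ⟨j, rfl⟩ := List.mem_ofFn.mp hx
    exact hxp (X_mem_of_zeroLocus_subset_zero (hF M) (IsAssociatedPrime.isPrime hp) hFp j)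
  have hfin : (insert V (⋃ M, bad M '' primes M)).Finite :=
    (Set.finite_iUnion fun M => (associatedPrimes.finite R _).image _).insert V
  have htop : ⊤ ∉ hfin.toFinset := by
    simp only [Set.Finite.mem_toFinset, Set.mem_insert_iff, Set.mem_iUnion, Set.mem_image,
      not_or, not_exists, not_and]
    exact ⟨hV.symm, fun M p hp => hbad hp⟩
  obtain ⟨c, hc⟩ := (Set.ne_univ_iff_exists_notMem _).mp
    (Subspace.biUnion_ne_univ_of_top_notMem htop)
  simp only [Set.Finite.mem_toFinset, Set.mem_insert_iff, Set.mem_iUnion, Set.mem_image,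
    not_exists, SetLike.mem_coe] at hc
  refine ⟨c, hc V (Or.inl rfl), fun M => ?_⟩
  by_contra hreg
  have hmem : Fintype.linearCombination K (F M) c ∈
    {r : R | IsSMulRegular (R ⧸ (Ideal.ofList (rs M) • ⊤ : Ideal R)) r}ᶜ := hreg
  rw [← biUnion_associatedPrimes_eq_compl_regular, Set.mem_iUnion₂] at hmem
  obtain ⟨p, hp, hcp⟩ := hmem
  exact hc (bad M p) (Or.inr ⟨M, p, hp, rfl⟩) hcp

theorem exists_linearIndependent_isWeaklyRegular {ι : Type*} [Finite ι]
    {F : ι → Fin n → MvPolynomial (Fin n) K} (hF : ∀ M x, (∀ i, eval x (F M i) = 0) → x = 0) :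
    ∃ c : ℕ → Fin n → K, LinearIndependent K (fun i : Fin n => c i) ∧
      ∀ M, IsWeaklyRegular (MvPolynomial (Fin n) K)
        ((List.range n).map fun j => Fintype.linearCombination K (F M) (c j)) := by
  suffices ∀ k ≤ n, ∃ c : ℕ → Fin n → K, LinearIndependent K (fun i : Fin k => c i) ∧
      ∀ M, IsWeaklyRegular (MvPolynomial (Fin n) K)
        ((List.range k).map fun j => Fintype.linearCombination K (F M) (c j)) from this n le_rfl
  intro k hk
  induction k with
  | zero => exact ⟨0, linearIndependent_empty_type, fun M => by simp⟩
  | succ k ih =>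
    obtain ⟨c, hc, hreg⟩ := ih (by omega)
    have hspan : Submodule.span K (Set.range fun i : Fin k => c i) ≠ ⊤ := fun h => by
      have := finrank_span_eq_card hc
      rw [h, finrank_top, Module.finrank_fin_fun, Fintype.card_fin] at this
      omega
    obtain ⟨c', hc', hreg'⟩ := exists_notMem_and_isSMulRegular hF hreg
      (fun M => by simpa using hk) hspan
    have hlt (i : ℕ) (hi : i < k) : Function.update c k c' i = c i :=
      Function.update_of_ne hi.ne _ _
    refine ⟨Function.update c k c', ?_, fun M => ?_⟩
    · have : (fun i : Fin (k + 1) => Function.update c k c' i) =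
          Fin.snoc (fun i : Fin k => c i) c' := by
        ext i : 1
        refine Fin.lastCases ?_ (fun i => ?_) i <;> simp [hlt]
      rw [this, linearIndependent_finSnoc]
      exact ⟨hc, hc'⟩
    · rw [List.range_succ, List.map_append, List.map_singleton, Function.update_self,
        isWeaklyRegular_append_iff, isWeaklyRegular_singleton_iff,
        List.map_congr_left fun i hi => by rw [hlt i (List.mem_range.mp hi)]]
      exact ⟨hreg M, hreg' M⟩

end GenericCombinations

end RegularSequences

/-! ### Strictly filtered regular sequences -/

section FilteredRegular

open Module

variable {K R : Type*} [Field K] [CommRing R] [Algebra K R]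

lemma mem_prefixIdeal_iff {L : ℕ → R} {k : ℕ} {x : R} :
    x ∈ prefixIdeal L k ↔ ∃ g : ℕ → R, x = ∑ i ∈ Finset.range k, L i * g i := by
  refine ⟨fun hx => ?_, ?_⟩
  · rw [prefixIdeal, ← Finset.coe_range] at hx
    obtain ⟨c, rfl⟩ := (Submodule.mem_span_image_finset_iff_exists_fun R).mp hx
    refine ⟨fun i => if h : i ∈ Finset.range k then c ⟨i, h⟩ else 0, ?_⟩
    rw [← Finset.sum_coe_sort (Finset.range k)]
    exact Finset.sum_congr rfl fun i _ => by simp only [i.2, dif_pos, smul_eq_mul, mul_comm]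
  · rintro ⟨g, rfl⟩
    exact Ideal.sum_mem _ fun i hi =>
      Ideal.mul_mem_right _ _ (Ideal.subset_span ⟨i, Finset.mem_range.mp hi, rfl⟩)

lemma prefixIdeal_mono (L : ℕ → R) : Monotone (prefixIdeal L) := fun _ _ h =>
  Ideal.span_mono (Set.image_mono (Set.Iio_subset_Iio h))

/-- The terms `L 0, …, L (n - 1)` raise the degree of the filtration `G` by `s`, and their symbols
of degree `s` form a regular sequence on the associated graded ring. The field `lift` states the
latter without mentioning the graded ring: a relation between the symbols that holds up to lower
order expresses the coefficient of `L k` through the previous terms, up to lower order. -/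
structure IsFilteredRegular (L : ℕ → R) (n : ℕ) (G : ℤ → Submodule K R) (s : ℤ) : Prop where
  mono : Monotone G
  eq_bot_of_neg : ∀ m < 0, G m = ⊥
  exhaustive : ∀ x, ∃ m, x ∈ G m
  mul_mem : ∀ i m x, x ∈ G m → L i * x ∈ G (m + s)
  lift : ∀ k < n, ∀ m g (g' : ℕ → R), g ∈ G m → (∀ i < k, g' i ∈ G m) →
    L k * g - ∑ i ∈ Finset.range k, L i * g' i ∈ G (m + s - 1) →
    ∃ h : ℕ → R, (∀ i < k, h i ∈ G (m - s)) ∧ g - ∑ i ∈ Finset.range k, L i * h i ∈ G (m - 1)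

namespace IsFilteredRegular

variable {L : ℕ → R} {n : ℕ} {G : ℤ → Submodule K R} {s : ℤ}

lemma exists_coeff_mem_of_coeff_mem_succ (hG : IsFilteredRegular L n G s) {k : ℕ} (hk : k < n)
    (hstrict : ∀ m, ∀ g ∈ G m, g ∈ prefixIdeal L k →
      ∃ h : ℕ → R, (∀ i < k, h i ∈ G (m - s)) ∧ g = ∑ i ∈ Finset.range k, L i * h i)
    {m a : ℤ} (hma : m ≤ a + s) {g : R} (hg : g ∈ G m) {c : ℕ → R}
    (hc : ∀ i < k + 1, c i ∈ G (a + 1)) (hgc : g = ∑ i ∈ Finset.range (k + 1), L i * c i) :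
    ∃ h : ℕ → R, (∀ i < k + 1, h i ∈ G a) ∧ g = ∑ i ∈ Finset.range (k + 1), L i * h i := by
  rw [Finset.sum_range_succ] at hgc
  obtain ⟨h, -, hlift⟩ := hG.lift k hk (a + 1) (c k) (fun i => -c i) (hc k k.lt_succ_self)
    (fun i hi => neg_mem (hc i (by omega))) (by
      have : L k * c k - ∑ i ∈ Finset.range k, L i * -c i = g := by simp [hgc, add_comm]
      exact this ▸ hG.mono (by omega) hg)
  rw [add_sub_cancel_right] at hlift
  set c' := c k - ∑ i ∈ Finset.range k, L i * h i with hc'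
  have hrest : g - L k * c' = ∑ i ∈ Finset.range k, L i * (c i + L k * h i) := by
    simp only [hgc, hc', mul_sub, Finset.mul_sum, mul_add, Finset.sum_add_distrib,
      mul_left_comm (L k)]
    ring
  obtain ⟨h', hh', heq⟩ := hstrict (a + s) (g - L k * c')
    (sub_mem (hG.mono hma hg) (hG.mul_mem k a c' hlift)) (mem_prefixIdeal_iff.mpr ⟨_, hrest⟩)
  refine ⟨Function.update h' k c', fun i hi => ?_, ?_⟩
  · rcases Nat.lt_succ_iff_lt_or_eq.mp hi with hi | rfl
    · simpa [Function.update_of_ne hi.ne] using hh' i hi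
    · simpa using hlift
  · rw [Finset.sum_range_succ, Function.update_self, ← sub_eq_iff_eq_add, heq]
    exact Finset.sum_congr rfl fun i hi => by
      rw [Function.update_of_ne (Finset.mem_range.mp hi).ne]

lemma exists_eq_sum_of_mem_prefixIdeal (hG : IsFilteredRegular L n G s) {k : ℕ} (hk : k ≤ n) :
    ∀ m, ∀ g ∈ G m, g ∈ prefixIdeal L k →
      ∃ h : ℕ → R, (∀ i < k, h i ∈ G (m - s)) ∧ g = ∑ i ∈ Finset.range k, L i * h i := by
  induction k with
  | zero =>
    intro m g _ hg
    exact ⟨0, by simp, by simpa [prefixIdeal] using hg⟩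
  | succ k ih =>
    intro m g hg hgI
    obtain ⟨c, hgc⟩ := mem_prefixIdeal_iff.mp hgI
    choose e he using fun i => hG.exhaustive (c i)
    obtain ⟨b, hb⟩ := ((Finset.range (k + 1)).image e).bddAbove
    have hc (i : ℕ) (hi : i < k + 1) : c i ∈ G b :=
      hG.mono (hb (Finset.mem_coe.mpr (Finset.mem_image_of_mem e (Finset.mem_range.mpr hi)))) (he i)
    suffices ∀ t : ℕ, (∃ h : ℕ → R, (∀ i < k + 1, h i ∈ G (m - s + t)) ∧
        g = ∑ i ∈ Finset.range (k + 1), L i * h i) →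
        ∃ h : ℕ → R, (∀ i < k + 1, h i ∈ G (m - s)) ∧
          g = ∑ i ∈ Finset.range (k + 1), L i * h i from
      this (b - m + s).toNat ⟨c, fun i hi => hG.mono (by omega) (hc i hi), hgc⟩
    intro t
    induction t with
    | zero => simp
    | succ t iht =>
      rintro ⟨h, hh, hgh⟩
      exact iht (hG.exists_coeff_mem_of_coeff_mem_succ hk (ih (by omega)) (by omega) hg
        (by simpa [add_assoc] using hh) hgh)

lemma mem_prefixIdeal_of_mul_mem (hG : IsFilteredRegular L n G s) {k : ℕ} (hk : k < n) {g : R}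
    (hg : L k * g ∈ prefixIdeal L k) : g ∈ prefixIdeal L k := by
  obtain ⟨m, hm⟩ := hG.exhaustive g
  suffices ∀ (t : ℕ) (g : R), g ∈ G ((t : ℤ) - 1) → L k * g ∈ prefixIdeal L k →
      g ∈ prefixIdeal L k from this (m + 1).toNat g (hG.mono (by omega) hm) hg
  intro t
  induction t with
  | zero =>
    intro g hg _
    rw [hG.eq_bot_of_neg _ (by simp), Submodule.mem_bot] at hg
    exact hg ▸ zero_mem _
  | succ t ih =>
    intro g hg hI
    have hg : g ∈ G t := by simpa using hg
    obtain ⟨c, hc, heq⟩ := hG.exists_eq_sum_of_mem_prefixIdeal hk.le _ _ (hG.mul_mem k _ _ hg) hI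
    obtain ⟨h, -, hlift⟩ := hG.lift k hk t g c hg (fun i hi => by simpa using hc i hi)
      (by rw [heq, sub_self]; exact zero_mem _)
    have hsum : ∑ i ∈ Finset.range k, L i * h i ∈ prefixIdeal L k :=
      mem_prefixIdeal_iff.mpr ⟨h, rfl⟩
    have hsub := ih _ hlift <| by
      rw [mul_sub]
      exact sub_mem hI (Ideal.mul_mem_left _ _ hsum)
    simpa using add_mem hsub hsum

end IsFilteredRegular

/-- The degree `≤ m` part `I_k ∩ G m` of the ideal `I_k` generated by the first `k` terms
of `L`. -/
def filteredPrefix (L : ℕ → R) (G : ℤ → Submodule K R) (k : ℕ) (m : ℤ) : Submodule K R :=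
  (prefixIdeal L k).restrictScalars K ⊓ G m

section

variable {L : ℕ → R} {n : ℕ} {G : ℤ → Submodule K R} {s : ℤ}

namespace IsFilteredRegular

lemma filteredPrefix_succ (hG : IsFilteredRegular L n G s) {k : ℕ} (hk : k < n) (m : ℤ) :
    filteredPrefix L G (k + 1) m =
      filteredPrefix L G k m ⊔ (G (m - s)).map (LinearMap.mulLeft K (L k)) := by
  have hmul {x : R} (hx : x ∈ G (m - s)) : L k * x ∈ G m := by
    simpa using hG.mul_mem k _ x hx
  refine le_antisymm ?_ (sup_le (inf_le_inf_right _ (prefixIdeal_mono L k.le_succ)) ?_)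
  · rintro g ⟨hg, hgm⟩
    obtain ⟨h, hh, heq⟩ := hG.exists_eq_sum_of_mem_prefixIdeal hk _ _ hgm hg
    rw [Finset.sum_range_succ] at heq
    have hlast : h k ∈ G (m - s) := hh k k.lt_succ_self
    refine heq ▸ Submodule.add_mem_sup ⟨mem_prefixIdeal_iff.mpr ⟨h, rfl⟩, ?_⟩ ⟨h k, hlast, rfl⟩
    exact eq_sub_of_add_eq heq.symm ▸ sub_mem hgm (hmul hlast)
  · rintro _ ⟨x, hx, rfl⟩
    exact ⟨Ideal.mul_mem_right _ _ (Ideal.subset_span ⟨k, k.lt_succ_self, rfl⟩), hmul hx⟩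

lemma filteredPrefix_inf_map_mulLeft (hG : IsFilteredRegular L n G s) {k : ℕ} (hk : k < n)
    (m : ℤ) :
    filteredPrefix L G k m ⊓ (G (m - s)).map (LinearMap.mulLeft K (L k)) =
      (filteredPrefix L G k (m - s)).map (LinearMap.mulLeft K (L k)) := by
  refine le_antisymm ?_ ?_
  · rintro _ ⟨⟨h, -⟩, x, hx, rfl⟩
    exact ⟨x, ⟨hG.mem_prefixIdeal_of_mul_mem hk h, hx⟩, rfl⟩
  · rintro _ ⟨x, ⟨hxI, hx⟩, rfl⟩
    exact ⟨⟨Ideal.mul_mem_left _ _ hxI, by simpa using hG.mul_mem k _ x hx⟩, x, hx, rfl⟩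

lemma finrank_filteredPrefix_succ [IsDomain R] (hG : IsFilteredRegular L n G s)
    [∀ m, FiniteDimensional K (G m)] {k : ℕ} (hk : k < n) (hL : L k ≠ 0) (m : ℤ) :
    finrank K (filteredPrefix L G (k + 1) m) + finrank K (filteredPrefix L G k (m - s)) =
      finrank K (filteredPrefix L G k m) + finrank K (G (m - s)) := by
  have hinj : Function.Injective (LinearMap.mulLeft K (L k)) := mul_right_injective₀ hL
  have hmap (V : Submodule K R) : finrank K (V.map (LinearMap.mulLeft K (L k))) = finrank K V :=
    (Submodule.equivMapOfInjective _ hinj V).finrank_eq.symm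
  have : FiniteDimensional K (filteredPrefix L G k m) :=
    Submodule.finiteDimensional_of_le inf_le_right
  have h := Submodule.finrank_sup_add_finrank_inf_eq (filteredPrefix L G k m)
    ((G (m - s)).map (LinearMap.mulLeft K (L k)))
  rwa [← hG.filteredPrefix_succ hk, hG.filteredPrefix_inf_map_mulLeft hk, hmap, hmap] at h

lemma finrank_sub_finrank_filteredPrefix [IsDomain R] (hG : IsFilteredRegular L n G s)
    [∀ m, FiniteDimensional K (G m)] (hL : ∀ k < n, L k ≠ 0) {k : ℕ} (hk : k ≤ n) (m : ℤ) :
    (finrank K (G m) - finrank K (filteredPrefix L G k m) : ℤ) =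
      (-1) ^ k * (fwdDiff (-s))^[k] (fun a => (finrank K (G a) : ℤ)) m := by
  induction k generalizing m with
  | zero =>
    have hbot : filteredPrefix L G 0 m = ⊥ := by
      rw [eq_bot_iff]
      rintro x ⟨hx, -⟩
      simpa [prefixIdeal] using hx
    rw [hbot, finrank_bot]
    simp
  | succ k ih =>
    have hrec := hG.finrank_filteredPrefix_succ hk (hL k hk) m
    have h₁ := ih (by omega) m
    have h₂ := ih (by omega) (m - s)
    rw [Function.iterate_succ_apply', fwdDiff, ← sub_eq_add_neg, pow_succ]
    push_cast [← @Nat.cast_inj ℤ] at hrec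
    linear_combination h₁ - h₂ - hrec

end IsFilteredRegular

end

lemma finrank_map_mkQ_sup {V : Type*} [AddCommGroup V] [Module K V] (I : Submodule K V)
    {A B : Submodule K V} (hAB : A ≤ B) [FiniteDimensional K B] :
    (finrank K (Submodule.map (A ⊔ I).mkQ (B ⊔ I)) : ℤ) =
      (finrank K B - finrank K (I ⊓ B : Submodule K V)) -
        (finrank K A - finrank K (I ⊓ A : Submodule K V)) := by
  have : FiniteDimensional K A := Submodule.finiteDimensional_of_le hAB
  have : FiniteDimensional K (I ⊓ B : Submodule K V) :=
    Submodule.finiteDimensional_of_le inf_le_right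
  have hrange : Submodule.map (A ⊔ I).mkQ (B ⊔ I) = ((A ⊔ I).mkQ.comp B.subtype).range := by
    rw [Submodule.map_sup, LinearMap.range_comp, Submodule.range_subtype, sup_eq_left,
      Submodule.map_le_iff_le_comap]
    refine le_sup_right.trans ((Submodule.ker_mkQ (A ⊔ I)).ge.trans ?_)
    exact LinearMap.ker_le_comap _
  have hker : finrank K ((A ⊔ I).mkQ.comp B.subtype).ker =
      finrank K (A ⊔ (I ⊓ B) : Submodule K V) := by
    rw [← sup_inf_assoc_of_le I hAB, LinearMap.ker_comp, Submodule.ker_mkQ,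
      (Submodule.equivMapOfInjective B.subtype B.injective_subtype _).finrank_eq,
      Submodule.map_comap_subtype, inf_comm]
  have hadd := ((A ⊔ I).mkQ.comp B.subtype).finrank_range_add_finrank_ker
  have hsup := Submodule.finrank_sup_add_finrank_inf_eq A (I ⊓ B)
  rw [inf_left_comm, inf_eq_left.mpr hAB] at hsup
  rw [hker, ← hrange] at hadd
  omega

theorem IsFilteredRegular.finrank_gr [IsDomain R] {L : ℕ → R} {n : ℕ} {G : ℤ → Submodule K R}
    {s : ℤ} (hG : IsFilteredRegular L n G s) [∀ m, FiniteDimensional K (G m)]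
    (hL : ∀ k < n, L k ≠ 0) {m m' : ℤ} (hm : m' ≤ m) :
    (finrank K (Submodule.map (G m' ⊔ (prefixIdeal L n).restrictScalars K).mkQ
      (G m ⊔ (prefixIdeal L n).restrictScalars K)) : ℤ) =
    (-1) ^ n * ((fwdDiff (-s))^[n] (fun a => (finrank K (G a) : ℤ)) m -
      (fwdDiff (-s))^[n] (fun a => (finrank K (G a) : ℤ)) m') := by
  rw [finrank_map_mkQ_sup _ (hG.mono hm), mul_sub,
    ← hG.finrank_sub_finrank_filteredPrefix hL le_rfl m,
    ← hG.finrank_sub_finrank_filteredPrefix hL le_rfl m']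
  rfl

end FilteredRegular

/-! ### The fan over the Newton boundary -/

section ConvexGeometry

open Module

section

variable {E : Type*} [NormedAddCommGroup E] [NormedSpace ℝ E]

section

variable [FiniteDimensional ℝ E]

lemma dense_setOf_forall_notMem {S : Set (Submodule ℝ E)} (hS : S.Finite) (htop : ⊤ ∉ S) :
    Dense {x : E | ∀ p ∈ S, x ∉ p} := by
  have hdense := dense_biInter_of_isOpen (S := S) (f := fun p => (p : Set E)ᶜ)
    (fun p _ => p.closed_of_finiteDimensional.isOpen_compl) hS.countable fun p hp => by
      rw [← interior_eq_empty_iff_dense_compl, ← Set.not_nonempty_iff_eq_empty]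
      exact fun hne => htop (p.eq_top_of_nonempty_interior' hne ▸ hp)
  exact hdense.mono fun x hx p hp => Set.mem_iInter₂.mp hx p hp

lemma extremePoints_convexHull_range {ι : Type*} [Finite ι] {p : ι → E}
    (hp : LinearIndependent ℝ p) :
    (convexHull ℝ (Set.range p)).extremePoints ℝ = Set.range p := by
  refine extremePoints_convexHull_subset.antisymm ?_
  rintro _ ⟨i, rfl⟩
  by_contra hi
  have hsub : (convexHull ℝ (Set.range p)).extremePoints ℝ ⊆ p '' {i}ᶜ := by
    intro x hx
    obtain ⟨j, rfl⟩ := extremePoints_convexHull_subset hx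
    exact ⟨j, fun hji : j = i => hi (hji ▸ hx), rfl⟩
  have hmem : p i ∈ closure (convexHull ℝ ((convexHull ℝ (Set.range p)).extremePoints ℝ)) := by
    rw [closure_convexHull_extremePoints ((Set.finite_range p).isCompact_convexHull (𝕜 := ℝ))
      (convex_convexHull ℝ _)]
    exact subset_convexHull ℝ _ ⟨i, rfl⟩
  have hspan : closure (convexHull ℝ ((convexHull ℝ (Set.range p)).extremePoints ℝ)) ⊆
      Submodule.span ℝ (p '' {i}ᶜ) :=
    closure_minimal (convexHull_min (hsub.trans Submodule.subset_span) (Submodule.convex _))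
      (Submodule.closed_of_finiteDimensional _)
  exact hp.notMem_span_image (s := {i}ᶜ) (by simp) (hspan hmem)

end

lemma exists_isGreatest_smul_mem {A : Set E} (hA : IsCompact A) (h₀ : (0 : E) ∈ A) {x : E}
    (hx : x ≠ 0) : ∃ r : ℝ, IsGreatest {t : ℝ | t • x ∈ A} r :=
  ((isClosedEmbedding_smul_left hx).isCompact_preimage hA).exists_isGreatest
    ⟨0, by simpa using h₀⟩

lemma exists_supporting_functional {A : Set E} (hA : Convex ℝ A) (hcomp : IsCompact A)
    (h₀ : (0 : E) ∈ A) {x : E} (hx : x ≠ 0) {t : ℝ} (ht : 0 < t) (htx : t • x ∈ interior A) :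
    ∃ (r : ℝ) (u : E →ₗ[ℝ] ℝ), 0 < r ∧ r • x ∈ A ∧ u (r • x) = 1 ∧ ∀ z ∈ A, u z ≤ 1 := by
  obtain ⟨r, hrA, hmax⟩ := exists_isGreatest_smul_mem hcomp h₀ hx
  have hr : 0 < r := ht.trans_le (hmax (interior_subset htx : t • x ∈ A))
  have hrint : r • x ∉ interior A := fun hint => by
    have hnhds : {s : ℝ | s • x ∈ A} ∈ nhds r :=
      (by fun_prop : Continuous fun s : ℝ => s • x).continuousAt (mem_interior_iff_mem_nhds.mp hint)
    obtain ⟨s, hrs, hs⟩ := Filter.Eventually.exists_gt hnhds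
    exact hrs.not_ge (hmax hs)
  obtain ⟨l, hl⟩ := geometric_hahn_banach_open_point hA.interior isOpen_interior hrint
  have hle : ∀ z ∈ A, l z ≤ l (r • x) := fun z hz =>
    closure_minimal (fun a ha => (hl a ha).le) (isClosed_le l.continuous continuous_const) <| by
      rw [hA.closure_interior_eq_closure_of_nonempty_interior ⟨_, htx⟩]
      exact subset_closure hz
  have hpos : 0 < l (r • x) := by
    have hlt := hl _ htx
    have h0 := hle 0 h₀
    simp only [map_smul, map_zero, smul_eq_mul] at hlt h0 ⊢
    refine h0.lt_of_ne fun h => ?_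
    rw [(mul_eq_zero_iff_left hr.ne').mp h.symm] at hlt
    simp at hlt
  refine ⟨r, (l (r • x))⁻¹ • l.toLinearMap, hr, hrA, inv_mul_cancel₀ hpos.ne', fun z hz => ?_⟩
  exact (inv_mul_le_iff₀ hpos).mpr (by simpa using hle z hz)

end

lemma linearIndependent_of_affineIndependent {E ι : Type*} [AddCommGroup E] [Module ℝ E]
    {p : ι → E} (hp : AffineIndependent ℝ p) {u : E →ₗ[ℝ] ℝ} (hu : ∀ i, u (p i) = 1) :
    LinearIndependent ℝ p := by
  refine linearIndependent_iff'.mpr fun s g hg => ?_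
  have hsum : ∑ i ∈ s, g i = 0 := by simpa [map_sum, hu] using congrArg u hg
  exact affineIndependent_iff.mp hp s g hsum hg

lemma sum_smul_mem_of_sum_le_one {E ι : Type*} [AddCommGroup E] [Module ℝ E] {A : Set E}
    (hA : Convex ℝ A) (h₀ : (0 : E) ∈ A) {t : Finset ι} {w : ι → ℝ} {z : ι → E}
    (hw : ∀ i ∈ t, 0 ≤ w i) (hsum : ∑ i ∈ t, w i ≤ 1) (hz : ∀ i ∈ t, z i ∈ A) :
    ∑ i ∈ t, w i • z i ∈ A := by
  rcases (Finset.sum_nonneg hw).eq_or_lt with h | h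
  · have hzero := (Finset.sum_eq_zero_iff_of_nonneg hw).mp h.symm
    rwa [Finset.sum_eq_zero fun i hi => by rw [hzero i hi, zero_smul]]
  · have hmem := hA.smul_mem_of_zero_mem h₀ (hA.centerMass_mem hw h hz) ⟨h.le, hsum⟩
    rwa [Finset.centerMass, smul_inv_smul₀ h.ne'] at hmem

lemma coord_nonneg_of_mem_convexHull {E ι : Type*} [AddCommGroup E] [Module ℝ E]
    (b : Basis ι ℝ E) {x : E} (hx : x ∈ convexHull ℝ (Set.range b)) (i : ι) : 0 ≤ b.coord i x := by
  refine convexHull_min (t := {x | 0 ≤ b.coord i x}) ?_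
    (convex_halfSpace_ge (b.coord i).isLinear 0) hx
  rintro _ ⟨j, rfl⟩
  classical
  simp only [Set.mem_ofPred_eq, Basis.coord_apply, Basis.repr_self, Finsupp.single_apply]
  split_ifs <;> norm_num

lemma IsFace.isExtreme {σ : Type*} {P Δ : Set (σ → ℝ)} (hΔ : IsFace P Δ) :
    IsExtreme ℝ P Δ := by
  obtain ⟨-, l, c, hle, rfl⟩ := hΔ
  refine ⟨fun x hx => hx.1, fun x hx y hy z hz hxyz => ?_⟩
  obtain ⟨a, b, ha, hb, hab, rfl⟩ := hxyz
  have hlz := hz.2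
  simp only [map_add, map_smul, smul_eq_mul] at hlz
  refine ⟨hx, le_antisymm (hle x hx) ?_⟩
  have hyc := mul_le_mul_of_nonneg_left (hle y hy) hb.le
  exact le_of_mul_le_mul_left (by linear_combination hyc - hlz + c * hab) ha

variable {n : ℕ}

lemma faceDim_lt_of_forall_apply_eq {s : Set (Fin n → ℝ)} {u : (Fin n → ℝ) →ₗ[ℝ] ℝ} (hu : u ≠ 0)
    {c : ℝ} (hs : ∀ z ∈ s, u z = c) : faceDim s < n := by
  have hle : (affineSpan ℝ s).direction ≤ LinearMap.ker u := by
    rw [direction_affineSpan, vectorSpan, Submodule.span_le]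
    rintro _ ⟨a, ha, b, hb, rfl⟩
    exact LinearMap.sub_mem_ker_iff.mpr ((hs a ha).trans (hs b hb).symm)
  have hker := Module.Dual.finrank_ker_add_one_of_ne_zero (f := u) hu
  rw [finrank_fin_fun] at hker
  exact Nat.lt_of_lt_of_eq (Nat.lt_succ_of_le (Submodule.finrank_mono hle)) hker

end ConvexGeometry

section NewtonPolytope

variable {σ : Type*} {f : MvPolynomial σ ℂ}

lemma zero_mem_newtonPolytope : (0 : σ → ℝ) ∈ newtonPolytope f :=
  subset_convexHull ℝ _ (Or.inl rfl)

lemma toR_mem_newtonPolytope {m : σ →₀ ℕ} (hm : m ∈ f.support) : toR m ∈ newtonPolytope f :=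
  subset_convexHull ℝ _ (Or.inr ⟨m, hm, rfl⟩)

lemma convex_newtonPolytope : Convex ℝ (newtonPolytope f) := convex_convexHull ℝ _

lemma finite_newtonPolytope_generators :
    ({0} ∪ toR '' (f.support : Set (σ →₀ ℕ)) : Set (σ → ℝ)).Finite :=
  (Set.finite_singleton _).union (f.support.finite_toSet.image _)

lemma isCompact_newtonPolytope : IsCompact (newtonPolytope f) :=
  finite_newtonPolytope_generators.isCompact_convexHull (𝕜 := ℝ)

lemma le_of_mem_newtonPolytope {l : (σ → ℝ) →ₗ[ℝ] ℝ} {c : ℝ} (hc : 0 ≤ c)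
    (h : ∀ m ∈ f.support, l (toR m) ≤ c) {x : σ → ℝ} (hx : x ∈ newtonPolytope f) : l x ≤ c := by
  refine convexHull_min (t := {x | l x ≤ c}) ?_ (convex_halfSpace_le l.isLinear c) hx
  rintro _ (rfl | ⟨m, hm, rfl⟩)
  · simpa using hc
  · exact h m hm

lemma nonneg_of_mem_newtonPolytope {x : σ → ℝ} (hx : x ∈ newtonPolytope f) (i : σ) : 0 ≤ x i := by
  have h := le_of_mem_newtonPolytope (l := -LinearMap.proj i) le_rfl
    (fun m _ => by simp [toR]) hx
  simpa using h

lemma NBFace.extremePoints_subset {Δ : Set (σ → ℝ)} (hΔ : NBFace f Δ) :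
    Δ.extremePoints ℝ ⊆ toR '' (f.support : Set (σ →₀ ℕ)) := by
  intro x hx
  have hxP := hΔ.1.isExtreme.extremePoints_subset_extremePoints hx
  refine (extremePoints_convexHull_subset hxP).resolve_left fun h => hΔ.2 ?_
  exact h ▸ hx.1

end NewtonPolytope

section SimplexInPolytope

variable {n : ℕ} {f : MvPolynomial (Fin n) ℂ}

lemma mem_newtonPolytope_of_sum_le_one (hconv : Convenient f) {z : Fin n → ℝ}
    (hz : ∀ i, 0 ≤ z i) (hsum : ∑ i, z i ≤ 1) : z ∈ newtonPolytope f := by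
  choose k hk hkf using hconv
  have hk' (i : Fin n) : (1 : ℝ) ≤ k i := by exact_mod_cast hk i
  have hmem (i : Fin n) : toR (Finsupp.single i (k i)) ∈ newtonPolytope f :=
    toR_mem_newtonPolytope (mem_support_iff.mpr (hkf i))
  have hz' : z = ∑ i, (z i / k i) • toR (Finsupp.single i (k i)) := by
    ext j
    have : (k j : ℝ) ≠ 0 := (zero_lt_one.trans_le (hk' j)).ne'
    simp [toR, Finset.sum_apply, Finsupp.single_apply, this]
  have hle : ∑ i, z i / k i ≤ 1 :=
    (Finset.sum_le_sum fun i _ => div_le_self (hz i) (hk' i)).trans hsum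
  have hpos : ∀ i ∈ Finset.univ, 0 ≤ z i / k i := fun i _ => div_nonneg (hz i) (by positivity)
  rw [hz']
  exact sum_smul_mem_of_sum_le_one convex_newtonPolytope zero_mem_newtonPolytope hpos hle
    fun i _ => hmem i

lemma mem_interior_newtonPolytope (hconv : Convenient f) {z : Fin n → ℝ}
    (hz : ∀ i, 0 < z i) (hsum : ∑ i, z i < 1) : z ∈ interior (newtonPolytope f) := by
  have hopen : IsOpen ((⋂ i, {z : Fin n → ℝ | 0 < z i}) ∩ {z | ∑ i, z i < 1}) :=
    (isOpen_iInter_of_finite fun i => isOpen_lt continuous_const (continuous_apply i)).inter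
      (isOpen_lt (by fun_prop) continuous_const)
  refine interior_maximal (fun y hy => ?_) hopen ⟨Set.mem_iInter.mpr hz, hsum⟩
  exact mem_newtonPolytope_of_sum_le_one hconv (fun i => (Set.mem_iInter.mp hy.1 i).le) hy.2.le

end SimplexInPolytope

section SimplicialFacets

open Module

variable {n : ℕ} {f : MvPolynomial (Fin n) ℂ}

/-- The linear functional taking the value `1` on the vectors of the basis `b`. When these are the
vertices of a facet of the Newton boundary, this is the functional `⟨u_F, ·⟩` of that facet. -/
noncomputable def facetFunctional (b : Basis (Fin n) ℝ (Fin n → ℝ)) : (Fin n → ℝ) →ₗ[ℝ] ℝ :=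
  ∑ i, b.coord i

lemma facetFunctional_apply (b : Basis (Fin n) ℝ (Fin n → ℝ)) (x : Fin n → ℝ) :
    facetFunctional b x = ∑ i, b.coord i x := by
  simp only [facetFunctional, LinearMap.sum_apply]

lemma facetFunctional_basis (b : Basis (Fin n) ℝ (Fin n → ℝ)) (i : Fin n) :
    facetFunctional b (b i) = 1 := by
  simp [facetFunctional_apply, Finsupp.single_apply]

/-- The vectors `b i`, whose integral coordinates are recorded by the exponents `e i`, are the
vertices of a simplicial facet of the Newton boundary of `f`. -/
structure IsSimplicialFacet (f : MvPolynomial (Fin n) ℂ) (b : Basis (Fin n) ℝ (Fin n → ℝ))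
    (e : Fin n → (Fin n →₀ ℕ)) : Prop where
  basis_eq : ∀ i, b i = toR (e i)
  mem_support : ∀ i, e i ∈ f.support
  functional_le : ∀ m ∈ f.support, facetFunctional b (toR m) ≤ 1
  coord_nonneg : ∀ m ∈ f.support, facetFunctional b (toR m) = 1 → ∀ i, 0 ≤ b.coord i (toR m)

lemma IsSimplicialFacet.coord_nonneg_of_functional_eq {b b' : Basis (Fin n) ℝ (Fin n → ℝ)}
    {e e' : Fin n → (Fin n →₀ ℕ)} (h : IsSimplicialFacet f b e) (h' : IsSimplicialFacet f b' e')
    (heq : facetFunctional b = facetFunctional b') {x : Fin n → ℝ} (hx : ∀ i, 0 ≤ b.coord i x)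
    (i : Fin n) : 0 ≤ b'.coord i x := by
  have hvertex (j : Fin n) : 0 ≤ b'.coord i (b j) := by
    rw [h.basis_eq]
    refine h'.coord_nonneg (e j) (h.mem_support j) ?_ i
    rw [← heq, ← h.basis_eq, facetFunctional_basis]
  rw [← b.sum_repr x, map_sum]
  exact Finset.sum_nonneg fun j _ => by
    rw [map_smul]
    exact mul_nonneg (hx j) (hvertex j)

/-- A vector is generic for `f` if a subspace spanned by exponents of `f` contains it only
if it is the whole space. -/
def IsGenericFor (f : MvPolynomial (Fin n) ℂ) (x : Fin n → ℝ) : Prop :=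
  ∀ T ⊆ toR '' (f.support : Set (Fin n →₀ ℕ)), x ∈ Submodule.span ℝ T → Submodule.span ℝ T = ⊤

lemma exists_isSimplicialFacet_of_eq_convexHull {u : (Fin n → ℝ) →ₗ[ℝ] ℝ}
    (hu : ∀ z ∈ newtonPolytope f, u z ≤ 1) {k : ℕ} {p : Fin (k + 1) → (Fin n → ℝ)}
    (hp : AffineIndependent ℝ p)
    (hface : {z ∈ newtonPolytope f | u z = 1} = convexHull ℝ (Set.range p))
    {x : Fin n → ℝ} (hx : x ∈ convexHull ℝ (Set.range p)) (hgen : IsGenericFor f x) :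
    ∃ b e, IsSimplicialFacet f b e ∧ ∀ i, 0 ≤ b.coord i x := by
  have hmem (j : Fin (k + 1)) : p j ∈ {z ∈ newtonPolytope f | u z = 1} :=
    hface ▸ subset_convexHull ℝ _ ⟨j, rfl⟩
  have hli : LinearIndependent ℝ p :=
    linearIndependent_of_affineIndependent hp fun j => (hmem j).2
  have hNB : NBFace f {z ∈ newtonPolytope f | u z = 1} :=
    ⟨⟨⟨p 0, hmem 0⟩, u, 1, hu, rfl⟩, fun h => zero_ne_one ((map_zero u).symm.trans h.2)⟩
  have hexp (j : Fin (k + 1)) : p j ∈ toR '' (f.support : Set (Fin n →₀ ℕ)) :=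
    hNB.extremePoints_subset (by rw [hface, extremePoints_convexHull_range hli]; exact ⟨j, rfl⟩)
  have hspan : Submodule.span ℝ (Set.range p) = ⊤ :=
    hgen _ (Set.range_subset_iff.mpr hexp)
      (convexHull_min Submodule.subset_span (Submodule.convex _) hx)
  obtain rfl : n = k + 1 := by
    have := finrank_span_eq_card hli
    rwa [hspan, finrank_top, finrank_fin_fun, Fintype.card_fin] at this
  choose e he hep using hexp
  let b := Basis.mk hli hspan.ge
  have hb : ⇑b = p := Basis.coe_mk hli hspan.ge
  have hub : facetFunctional b = u := b.ext fun i => by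
    rw [facetFunctional_basis, hb, (hmem i).2]
  rw [← hb] at hface hx
  refine ⟨b, e, ⟨fun i => by rw [hb, hep], he, fun m hm => ?_, fun m hm hm1 => ?_⟩,
    coord_nonneg_of_mem_convexHull b hx⟩
  · exact hub ▸ hu _ (toR_mem_newtonPolytope hm)
  · exact coord_nonneg_of_mem_convexHull b (hface ▸ ⟨toR_mem_newtonPolytope hm, hub ▸ hm1⟩)

lemma exists_isSimplicialFacet (hn : 1 ≤ n) (hconv : Convenient f)
    (hsimp : ∀ Δ : Set (Fin n → ℝ), FcalMem f Δ → faceDim Δ ≤ n - 1 → IsSimplex Δ)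
    {x : Fin n → ℝ} (hx : ∀ i, 0 < x i) (hgen : IsGenericFor f x) :
    ∃ b e, IsSimplicialFacet f b e ∧ ∀ i, 0 ≤ b.coord i x := by
  have hx₀ : x ≠ 0 := fun h => (hx ⟨0, hn⟩).ne' (congrFun h _)
  have hsum : 0 ≤ ∑ i, x i := Finset.sum_nonneg fun i _ => (hx i).le
  obtain ⟨r, u, hr, hrP, hur, hu⟩ := exists_supporting_functional (t := (1 + ∑ i, x i)⁻¹)
    convex_newtonPolytope isCompact_newtonPolytope zero_mem_newtonPolytope hx₀ (by positivity)
    (mem_interior_newtonPolytope hconv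
      (fun i => mul_pos (by positivity) (hx i)) (by
        simp only [Pi.smul_apply, smul_eq_mul, ← Finset.mul_sum]
        rw [inv_mul_lt_iff₀ (by positivity)]
        linarith))
  have hmem : r • x ∈ {z ∈ newtonPolytope f | u z = 1} := ⟨hrP, hur⟩
  have hF : FcalMem f {z ∈ newtonPolytope f | u z = 1} := by
    refine ⟨⟨⟨_, hmem⟩, u, 1, hu, rfl⟩, fun h => ?_⟩
    obtain ⟨i, hi⟩ := Set.mem_iUnion.mp (h hmem)
    exact (mul_pos hr (hx i)).ne' hi
  have hu₀ : u ≠ 0 := by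
    rintro rfl
    simp at hur
  obtain ⟨k, p, hp, hface⟩ := hsimp _ hF
    (Nat.le_sub_one_of_lt (faceDim_lt_of_forall_apply_eq hu₀ fun z hz => hz.2))
  obtain ⟨b, e, hbe, hpos⟩ := exists_isSimplicialFacet_of_eq_convexHull hu hp hface
    (hface ▸ hmem) fun T hT h => hgen T hT ((Submodule.smul_mem_iff _ hr.ne').mp h)
  refine ⟨b, e, hbe, fun i => ?_⟩
  have := hpos i
  rw [map_smul, smul_eq_mul] at this
  exact nonneg_of_mul_nonneg_right this hr

lemma subset_of_isClosed_of_forall_pos {S : Set (Submodule ℝ (Fin n → ℝ))} (hS : S.Finite)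
    (htop : ⊤ ∉ S) {C : Set (Fin n → ℝ)} (hC : IsClosed C)
    (hSC : ∀ x, (∀ i, 0 < x i) → (∀ p ∈ S, x ∉ p) → x ∈ C) {x : Fin n → ℝ} (hx : ∀ i, 0 ≤ x i) :
    x ∈ C := by
  have hpos : IsOpen (Set.univ.pi fun _ : Fin n => Set.Ioi (0 : ℝ)) :=
    isOpen_set_pi Set.finite_univ fun _ _ => isOpen_Ioi
  have hsub : closure (Set.univ.pi fun _ : Fin n => Set.Ioi (0 : ℝ)) ⊆ C := by
    refine closure_minimal (((dense_setOf_forall_notMem hS htop).open_subset_closure_inter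
      hpos).trans (closure_minimal ?_ hC)) hC
    exact fun y hy => hSC y (fun i => hy.1 i trivial) hy.2
  refine hsub ?_
  rw [closure_pi_set]
  exact fun i _ => by simpa using hx i

/-- The maximal cones of the fan over the Newton boundary: the cones spanned by its facets, all of
them simplicial, together cover the nonnegative orthant. Cones are indexed abstractly; the facet
of the cone `M` has vertices `basis M i`, which are the exponents `exponent M i`. -/
structure FacetFan (f : MvPolynomial (Fin n) ℂ) where
  ι : Type
  [fintype : Fintype ι]
  basis : ι → Basis (Fin n) ℝ (Fin n → ℝ)
  exponent : ι → Fin n → (Fin n →₀ ℕ)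
  isSimplicialFacet : ∀ M, IsSimplicialFacet f (basis M) (exponent M)
  cover : ∀ x : Fin n → ℝ, (∀ i, 0 ≤ x i) → ∃ M, ∀ i, 0 ≤ (basis M).coord i x
  injective : Function.Injective fun M => facetFunctional (basis M)

theorem exists_facetFan (hn : 1 ≤ n) (hconv : Convenient f)
    (hsimp : ∀ Δ : Set (Fin n → ℝ), FcalMem f Δ → faceDim Δ ≤ n - 1 → IsSimplex Δ) :
    Nonempty (FacetFan f) := by
  let ι := {u // ∃ b e, IsSimplicialFacet f b e ∧ facetFunctional b = u}
  choose b e hbe hu using fun M : ι => M.2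
  have hfin : Finite ι := by
    let g : ι → Fin n → f.support := fun M i => ⟨e M i, (hbe M).mem_support i⟩
    refine Finite.of_injective g fun M M' h => Subtype.ext ((b M).ext fun i => ?_)
    have he : e M i = e M' i := congrArg Subtype.val (congrFun h i)
    rw [← hu M, ← hu M', facetFunctional_basis, (hbe M).basis_eq, he, ← (hbe M').basis_eq,
      facetFunctional_basis]
  have hclosed : IsClosed (⋃ M : ι, ⋂ i, {x | 0 ≤ (b M).coord i x}) :=
    isClosed_iUnion_of_finite fun M => isClosed_iInter fun i =>
      isClosed_le continuous_const (LinearMap.continuous_of_finiteDimensional _)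
  let S : Set (Submodule ℝ (Fin n → ℝ)) :=
    Submodule.span ℝ '' (𝒫 (toR '' (f.support : Set (Fin n →₀ ℕ)))) \ {⊤}
  have hS : S.Finite :=
    (((f.support.finite_toSet.image toR).finite_subsets).image _).subset Set.sdiff_subset
  have hcover (x : Fin n → ℝ) (hx : ∀ i, 0 ≤ x i) : ∃ M : ι, ∀ i, 0 ≤ (b M).coord i x := by
    refine (subset_of_isClosed_of_forall_pos hS (fun h => h.2 rfl) hclosed (fun y hy hyS => ?_)
      hx |> Set.mem_iUnion.mp).imp fun M hM => Set.mem_iInter.mp hM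
    obtain ⟨b', e', hbe', hpos⟩ := exists_isSimplicialFacet hn hconv hsimp hy fun T hT hyT => by
      by_contra hne
      exact hyS _ ⟨⟨T, hT, rfl⟩, hne⟩ hyT
    let M : ι := ⟨facetFunctional b', b', e', hbe', rfl⟩
    exact Set.mem_iUnion.mpr ⟨M, Set.mem_iInter.mpr
      (hbe'.coord_nonneg_of_functional_eq (hbe M) (hu M).symm hpos)⟩
  have := Fintype.ofFinite ι
  exact ⟨⟨ι, b, e, hbe, hcover, fun M M' h => Subtype.ext ((hu M).symm.trans (h.trans (hu M')))⟩⟩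

end SimplicialFacets

/-! ### Cones, sectors and the Newton function -/

section LatticePoints

variable {σ : Type*}

lemma toR_add (v b : σ →₀ ℕ) : toR (v + b) = toR v + toR b :=
  funext fun _ => Nat.cast_add _ _

lemma toR_zero : toR (0 : σ →₀ ℕ) = 0 := funext fun _ => Nat.cast_zero

lemma toR_nonneg (m : σ →₀ ℕ) (i : σ) : 0 ≤ toR m i := Nat.cast_nonneg _

lemma toR_injective : Function.Injective (toR : (σ →₀ ℕ) → σ → ℝ) := fun _ _ h =>
  Finsupp.ext fun i => Nat.cast_injective (congrFun h i)

open Module in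
lemma exists_int_mul_coord {ι : Type*} [Finite ι] (b : Basis ι ℝ (ι → ℝ))
    {B : Matrix ι ι ℤ} (hb : ∀ i k, b i k = B k i) :
    ∃ d : ℤ, d ≠ 0 ∧ ∀ (v : ι → ℤ) i, ∃ z : ℤ, d * b.coord i (fun k => (v k : ℝ)) = z := by
  classical
  have := Fintype.ofFinite ι
  have hmatrix : (Pi.basisFun ℝ ι).toMatrix b = (Int.castRingHom ℝ).mapMatrix B := by
    ext k i
    simpa [Basis.toMatrix_apply] using hb i k
  have hdet : ((B.det : ℤ) : ℝ) = ((Pi.basisFun ℝ ι).toMatrix b).det := by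
    rw [hmatrix, ← RingHom.map_det, eq_intCast]
  refine ⟨B.det, fun h => ?_, fun v i => ⟨B.adjugate.mulVec v i, ?_⟩⟩
  · rw [h, Int.cast_zero, ← Basis.det_apply] at hdet
    exact ((Pi.basisFun ℝ ι).isUnit_det b).ne_zero hdet.symm
  · have hmul := b.toMatrix_mulVec_repr (Pi.basisFun ℝ ι) (fun k => (v k : ℝ))
    have hadj := congrFun (congrArg ((Pi.basisFun ℝ ι).toMatrix b).adjugate.mulVec hmul) i
    rw [Matrix.mulVec_mulVec, Matrix.adjugate_mul, Matrix.smul_mulVec, Matrix.one_mulVec,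
      ← hdet, hmatrix, ← RingHom.map_adjugate] at hadj
    simpa [Matrix.mulVec, dotProduct] using hadj

end LatticePoints

attribute [instance] FacetFan.fintype

namespace FacetFan

variable {n : ℕ} {f : MvPolynomial (Fin n) ℂ} (D : FacetFan f)

/-- The `i`-th vertex of the facet `M`. -/
noncomputable def vertex (M : D.ι) (i : Fin n) : Fin n → ℝ := D.basis M i

/-- The `i`-th coordinate with respect to the vertices of the facet `M`. -/
noncomputable def coord (M : D.ι) (i : Fin n) : (Fin n → ℝ) →ₗ[ℝ] ℝ := (D.basis M).coord i

/-- The linear functional, written `u_F` in the paper, which is `1` on the facet `F = M`. -/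
noncomputable def functional (M : D.ι) : (Fin n → ℝ) →ₗ[ℝ] ℝ := facetFunctional (D.basis M)

/-- The closed cone over the facet `M`. -/
noncomputable def cone (M : D.ι) : PointedCone ℝ (Fin n → ℝ) :=
  (PointedCone.positive ℝ (Fin n → ℝ)).comap (D.basis M).equivFun.toLinearMap

variable {D}

lemma mem_cone {M : D.ι} {x : Fin n → ℝ} : x ∈ D.cone M ↔ ∀ i, 0 ≤ D.coord M i x := Iff.rfl

lemma vertex_eq_toR (M : D.ι) (i : Fin n) : D.vertex M i = toR (D.exponent M i) :=
  (D.isSimplicialFacet M).basis_eq i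

lemma vertex_nonneg (M : D.ι) (i k : Fin n) : 0 ≤ D.vertex M i k :=
  vertex_eq_toR M i ▸ toR_nonneg _ k

lemma vertex_mem_newtonPolytope (M : D.ι) (i : Fin n) : D.vertex M i ∈ newtonPolytope f :=
  vertex_eq_toR M i ▸ toR_mem_newtonPolytope ((D.isSimplicialFacet M).mem_support i)

lemma linearIndependent_vertex (M : D.ι) : LinearIndependent ℝ (D.vertex M) :=
  (D.basis M).linearIndependent

lemma sum_coord_smul_vertex (M : D.ι) (x : Fin n → ℝ) :
    ∑ i, D.coord M i x • D.vertex M i = x :=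
  (D.basis M).sum_repr x

lemma coord_vertex (M : D.ι) (i j : Fin n) :
    D.coord M i (D.vertex M j) = if j = i then 1 else 0 := by
  rw [coord, vertex, Module.Basis.coord_apply, Module.Basis.repr_self, Finsupp.single_apply]

lemma functional_eq_sum (M : D.ι) (x : Fin n → ℝ) : D.functional M x = ∑ i, D.coord M i x :=
  facetFunctional_apply _ x

lemma functional_vertex (M : D.ι) (i : Fin n) : D.functional M (D.vertex M i) = 1 :=
  facetFunctional_basis _ i

lemma functional_toR_le_one (M : D.ι) {m : Fin n →₀ ℕ} (hm : m ∈ f.support) :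
    D.functional M (toR m) ≤ 1 :=
  (D.isSimplicialFacet M).functional_le m hm

lemma functional_le_one (M : D.ι) {z : Fin n → ℝ} (hz : z ∈ newtonPolytope f) :
    D.functional M z ≤ 1 :=
  le_of_mem_newtonPolytope zero_le_one (fun _ hm => functional_toR_le_one M hm) hz

lemma toR_mem_cone {M : D.ι} {m : Fin n →₀ ℕ} (hm : m ∈ f.support)
    (h : D.functional M (toR m) = 1) : toR m ∈ D.cone M :=
  (D.isSimplicialFacet M).coord_nonneg m hm h

lemma vertex_mem_cone_of_functional_eq {M M' : D.ι} {i : Fin n}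
    (h : D.functional M' (D.vertex M i) = 1) : D.vertex M i ∈ D.cone M' := by
  rw [vertex_eq_toR] at h ⊢
  exact toR_mem_cone ((D.isSimplicialFacet M).mem_support i) h

lemma nonneg_of_mem_cone {M : D.ι} {x : Fin n → ℝ} (hx : x ∈ D.cone M) (k : Fin n) :
    0 ≤ x k := by
  rw [← sum_coord_smul_vertex M x, Finset.sum_apply]
  exact Finset.sum_nonneg fun i _ => mul_nonneg (mem_cone.mp hx i) (vertex_nonneg M i k)

lemma functional_nonneg {M : D.ι} {x : Fin n → ℝ} (hx : x ∈ D.cone M) : 0 ≤ D.functional M x := by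
  rw [functional_eq_sum]
  exact Finset.sum_nonneg fun i _ => mem_cone.mp hx i

open scoped Pointwise in
lemma mem_smul_newtonPolytope {M : D.ι} {x : Fin n → ℝ} (hx : x ∈ D.cone M) {r : ℝ} (hr : 0 < r)
    (hxr : D.functional M x ≤ r) : x ∈ r • newtonPolytope f := by
  rw [Set.mem_smul_set_iff_inv_smul_mem₀ hr.ne', ← sum_coord_smul_vertex M (r⁻¹ • x)]
  refine sum_smul_mem_of_sum_le_one convex_newtonPolytope zero_mem_newtonPolytope
    (fun i _ => ?_) ?_ fun i _ => vertex_mem_newtonPolytope M i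
  · rw [map_smul]
    exact mul_nonneg (inv_nonneg.mpr hr.le) (mem_cone.mp hx i)
  · rwa [← functional_eq_sum, map_smul, smul_eq_mul, inv_mul_le_one₀ hr]

lemma functional_le_nu (M : D.ι) {x : Fin n → ℝ} (hx : ∀ i, 0 ≤ x i) :
    D.functional M x ≤ nu f x := by
  obtain ⟨M', hM'⟩ := D.cover x hx
  have hM'₀ := functional_nonneg (mem_cone.mpr hM')
  refine le_csInf ⟨D.functional M' x + 1, by positivity,
    mem_smul_newtonPolytope (mem_cone.mpr hM') (by positivity) (by linarith)⟩ ?_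
  rintro r ⟨hr, z, hz, rfl⟩
  rw [map_smul, smul_eq_mul]
  exact mul_le_of_le_one_right hr.le (functional_le_one M hz)

lemma nu_eq_functional {M : D.ι} {x : Fin n → ℝ} (hx : x ∈ D.cone M) :
    nu f x = D.functional M x := by
  refine le_antisymm (le_of_forall_gt_imp_ge_of_dense fun r hr => ?_)
    (functional_le_nu M (nonneg_of_mem_cone hx))
  have hr₀ := (functional_nonneg hx).trans_lt hr
  exact gauge_le_of_mem hr₀.le (mem_smul_newtonPolytope hx hr₀ hr.le)

lemma mem_cone_of_functional_eq_nu {M : D.ι} {x : Fin n → ℝ} (hx : ∀ i, 0 ≤ x i)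
    (h : D.functional M x = nu f x) : x ∈ D.cone M := by
  obtain ⟨M', hM'⟩ := D.cover x hx
  have hle (i : Fin n) : D.coord M' i x * D.functional M (D.vertex M' i) ≤ D.coord M' i x :=
    mul_le_of_le_one_right (hM' i) (functional_le_one M (vertex_mem_newtonPolytope M' i))
  have hsum : ∑ i, D.coord M' i x * D.functional M (D.vertex M' i) = ∑ i, D.coord M' i x := by
    rw [← functional_eq_sum, ← nu_eq_functional hM', ← h]
    conv_rhs => rw [← sum_coord_smul_vertex M' x, map_sum]
    simp only [map_smul, smul_eq_mul]
  have heq := (Finset.sum_eq_sum_iff_of_le fun i _ => hle i).mp hsum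
  rw [← sum_coord_smul_vertex M' x]
  refine Submodule.sum_mem _ fun i hi => ?_
  rcases (show 0 ≤ D.coord M' i x from hM' i).eq_or_lt with hzero | hpos
  · rw [← hzero, zero_smul]
    exact Submodule.zero_mem _
  · exact PointedCone.smul_mem _ hpos.le
      (vertex_mem_cone_of_functional_eq (mul_eq_left₀ hpos.ne' |>.mp (heq i hi)))

lemma finite_nu_le (D : FacetFan f) (β : ℝ) : {v : Fin n → ℕ | nu f (natToR v) ≤ β}.Finite := by
  obtain ⟨B, hB⟩ := isCompact_newtonPolytope (f := f) |>.isBounded.exists_norm_le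
  refine (Set.finite_Iic fun _ : Fin n => ⌈(|β| + 1) * B⌉₊).subset fun v hv k => ?_
  obtain ⟨M, hM⟩ := D.cover (natToR v) fun _ => Nat.cast_nonneg _
  have hv' : D.functional M (natToR v) ≤ |β| + 1 := by
    rw [← nu_eq_functional hM]
    linarith [hv.out, le_abs_self β]
  obtain ⟨z, hz, hzv⟩ := mem_smul_newtonPolytope hM (by positivity) hv'
  have hzk : z k ≤ B := (le_abs_self _).trans ((norm_le_pi_norm z k).trans (hB z hz))
  have hvk : (v k : ℝ) = (|β| + 1) * z k := (congrFun hzv k).symm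
  exact_mod_cast hvk.trans_le
    ((mul_le_mul_of_nonneg_left hzk (by positivity)).trans (Nat.le_ceil _))

variable (D) in
/-- The half-open cone of the points `v` such that `v + ε w` lies in the cone over the facet `M`
for all small `ε > 0`. For generic `w` these sectors partition the orthant. -/
def sector (w : Fin n → ℝ) (M : D.ι) : Set (Fin n → ℝ) :=
  {v | v ∈ D.cone M ∧ ∀ i, D.coord M i w < 0 → 0 < D.coord M i v}

open Filter Topology

lemma eventually_mem_cone_of_mem_sector {w v : Fin n → ℝ} {M : D.ι} (hv : v ∈ D.sector w M) :
    ∀ᶠ ε : ℝ in 𝓝[>] 0, v + ε • w ∈ D.cone M := by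
  simp only [mem_cone, map_add, map_smul, smul_eq_mul]
  refine eventually_all.mpr fun i => ?_
  by_cases hi : D.coord M i w < 0
  · have hlim : Tendsto (fun ε : ℝ => D.coord M i v + ε * D.coord M i w) (𝓝[>] 0)
        (𝓝 (D.coord M i v + 0 * D.coord M i w)) :=
      (Continuous.tendsto (by fun_prop) 0).mono_left nhdsWithin_le_nhds
    rw [zero_mul, add_zero] at hlim
    exact (hlim.eventually_const_lt (hv.2 i hi)).mono fun _ => le_of_lt
  · filter_upwards [self_mem_nhdsWithin] with ε hε
    exact add_nonneg (hv.1 i) (mul_nonneg (le_of_lt hε) (not_lt.mp hi))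

lemma functional_le_of_mem_sector {w v : Fin n → ℝ} {M M' : D.ι} (hv : v ∈ D.sector w M)
    (hv' : v ∈ D.cone M') : D.functional M' w ≤ D.functional M w := by
  obtain ⟨ε, hcone, hε⟩ :=
    ((eventually_mem_cone_of_mem_sector hv).and self_mem_nhdsWithin).exists
  have hle := functional_le_nu M' (nonneg_of_mem_cone hcone)
  simp only [nu_eq_functional hcone, map_add, map_smul, smul_eq_mul, ← nu_eq_functional hv',
    ← nu_eq_functional hv.1, add_le_add_iff_left] at hle
  exact le_of_mul_le_mul_left hle hε

lemma exists_mem_sector (D : FacetFan f) {w v : Fin n → ℝ}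
    (h : ∀ᶠ ε : ℝ in 𝓝[>] 0, ∀ i, 0 ≤ (v + ε • w) i) : ∃ M, v ∈ D.sector w M := by
  obtain ⟨M, hM⟩ := frequently_exists.mp
    (h.frequently.mono fun ε hε => D.cover (v + ε • w) hε)
  change ∃ᶠ ε : ℝ in 𝓝[>] 0, ∀ i, 0 ≤ D.coord M i (v + ε • w) at hM
  simp only [map_add, map_smul, smul_eq_mul] at hM
  refine ⟨M, fun i => ?_, fun i hi => ?_⟩
  · have hlim : Tendsto (fun ε : ℝ => D.coord M i v + ε * D.coord M i w) (𝓝[>] 0)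
        (𝓝 (D.coord M i v + 0 * D.coord M i w)) :=
      (Continuous.tendsto (by fun_prop) 0).mono_left nhdsWithin_le_nhds
    rw [zero_mul, add_zero] at hlim
    exact isClosed_Ici.mem_of_frequently_of_tendsto (hM.mono fun _ hε => hε i) hlim
  · obtain ⟨ε, hcoord, hε⟩ := (hM.and_eventually self_mem_nhdsWithin).exists
    linarith [hcoord i, mul_neg_of_pos_of_neg hε hi]

lemma exists_toR_mem_sector (D : FacetFan f) {w : Fin n → ℝ} (hw : ∀ i, 0 < w i)
    (v : Fin n →₀ ℕ) : ∃ M, toR v ∈ D.sector w M :=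
  D.exists_mem_sector (by
    filter_upwards [self_mem_nhdsWithin] with ε hε i
    exact add_nonneg (toR_nonneg v i) (mul_nonneg (le_of_lt hε) (hw i).le))

variable (D) in
/-- A positive vector on no wall of the fan which distinguishes the facets. -/
structure IsGeneric (w : Fin n → ℝ) : Prop where
  pos : ∀ i, 0 < w i
  coord_ne_zero : ∀ M i, D.coord M i w ≠ 0
  injective : Function.Injective fun M => D.functional M w

lemma exists_isGeneric (D : FacetFan f) : ∃ w, D.IsGeneric w := by
  let walls : Set (Submodule ℝ (Fin n → ℝ)) :=
    (Set.range fun p : D.ι × Fin n => LinearMap.ker (D.coord p.1 p.2)) ∪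
    ((fun p : D.ι × D.ι => LinearMap.ker (D.functional p.1 - D.functional p.2)) ''
      {p | p.1 ≠ p.2})
  have hfinite : walls.Finite := (Set.finite_range _).union (Set.toFinite _)
  have htop : ⊤ ∉ walls := by
    rintro (⟨⟨M, i⟩, h⟩ | ⟨⟨M, M'⟩, hne, h⟩)
    · have hzero := LinearMap.congr_fun (LinearMap.ker_eq_top.mp h) (D.vertex M i)
      rw [coord_vertex, if_pos rfl] at hzero
      exact one_ne_zero hzero
    · exact hne (D.injective (sub_eq_zero.mp (LinearMap.ker_eq_top.mp h)))
  have hopen : IsOpen (⋂ i, {x : Fin n → ℝ | 0 < x i}) :=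
    isOpen_iInter_of_finite fun i => isOpen_lt continuous_const (continuous_apply i)
  obtain ⟨w, hpos, hw⟩ := (dense_setOf_forall_notMem hfinite htop).inter_open_nonempty _ hopen
    ⟨1, Set.mem_iInter.mpr fun _ => zero_lt_one' ℝ⟩
  refine ⟨w, Set.mem_iInter.mp hpos, fun M i h => hw _ (Or.inl ⟨(M, i), rfl⟩) h,
    fun M M' h => ?_⟩
  by_contra hne
  exact hw _ (Or.inr ⟨(M, M'), hne, rfl⟩) (sub_eq_zero.mpr h)

lemma IsGeneric.eq_of_mem_sector {w v : Fin n → ℝ} (hw : D.IsGeneric w) {M M' : D.ι}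
    (h : v ∈ D.sector w M) (h' : v ∈ D.sector w M') : M = M' :=
  hw.injective (le_antisymm (functional_le_of_mem_sector h' h.1)
    (functional_le_of_mem_sector h h'.1))

lemma exists_denominator (D : FacetFan f) :
    ∃ d : ℕ, 0 < d ∧ ∀ M i (v : Fin n →₀ ℕ), ∃ z : ℤ, (d : ℝ) * D.coord M i (toR v) = z := by
  have hmatrix (M : D.ι) (i k : Fin n) :
      D.basis M i k = (Matrix.of fun k i => (D.exponent M i k : ℤ)) k i := by
    rw [(D.isSimplicialFacet M).basis_eq]
    simp [toR]
  choose d hd hint using fun M => exists_int_mul_coord (D.basis M) (hmatrix M)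
  refine ⟨∏ M, (d M).natAbs,
    Finset.prod_pos fun M _ => Int.natAbs_pos.mpr (hd M), fun M i v => ?_⟩
  obtain ⟨z, hz⟩ := hint M (fun k => v k) i
  obtain ⟨e, he⟩ : d M ∣ ((∏ M, (d M).natAbs : ℕ) : ℤ) :=
    Int.dvd_natCast.mpr (Finset.dvd_prod_of_mem _ (Finset.mem_univ M))
  refine ⟨e * z, ?_⟩
  rw [← Int.cast_natCast, he, Int.cast_mul, Int.cast_mul, ← hz, mul_comm (d M : ℝ), mul_assoc]
  simp only [Int.cast_natCast, coord]
  rfl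

end FacetFan

/-! ### The refined Newton weight -/

/-- A facet fan together with a generic direction, which assigns each lattice point to one sector,
and a common denominator of the coordinates of the lattice points. -/
structure RefinedFan {n : ℕ} (f : MvPolynomial (Fin n) ℂ) extends FacetFan f where
  direction : Fin n → ℝ
  isGeneric : toFacetFan.IsGeneric direction
  denominator : ℕ
  denominator_pos : 0 < denominator
  exists_int (M : ι) (i : Fin n) (v : Fin n →₀ ℕ) :
    ∃ z : ℤ, (denominator : ℝ) * toFacetFan.coord M i (toR v) = z

theorem exists_refinedFan {n : ℕ} {f : MvPolynomial (Fin n) ℂ} (hn : 1 ≤ n) (hconv : Convenient f)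
    (hsimp : ∀ Δ : Set (Fin n → ℝ), FcalMem f Δ → faceDim Δ ≤ n - 1 → IsSimplex Δ) :
    Nonempty (RefinedFan f) := by
  obtain ⟨D⟩ := exists_facetFan hn hconv hsimp
  obtain ⟨w, hw⟩ := D.exists_isGeneric
  obtain ⟨d, hd, hint⟩ := D.exists_denominator
  exact ⟨⟨D, w, hw, d, hd, hint⟩⟩

namespace RefinedFan

open FacetFan

variable {n : ℕ} {f : MvPolynomial (Fin n) ℂ} (R : RefinedFan f)

/-- The facet whose sector contains the exponent `v`. -/
noncomputable def facetOf (v : Fin n →₀ ℕ) : R.ι :=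
  (R.exists_toR_mem_sector R.isGeneric.pos v).choose

lemma mem_sector_facetOf (v : Fin n →₀ ℕ) : toR v ∈ R.sector R.direction (R.facetOf v) :=
  (R.exists_toR_mem_sector R.isGeneric.pos v).choose_spec

lemma facetOf_eq {M : R.ι} {v : Fin n →₀ ℕ} (h : toR v ∈ R.sector R.direction M) :
    R.facetOf v = M :=
  R.isGeneric.eq_of_mem_sector (R.mem_sector_facetOf v) h

section ScaledCoordinates

/-- The coordinates of an exponent with respect to the vertices of a facet, cleared of
denominators. -/
noncomputable def scaledCoord (M : R.ι) (v : Fin n →₀ ℕ) (i : Fin n) : ℤ :=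
  (R.exists_int M i v).choose

variable {R} {M : R.ι} {v v' b : Fin n →₀ ℕ} {i : Fin n}

variable (R) in
lemma denominator_cast_pos : (0 : ℝ) < R.denominator := Nat.cast_pos.mpr R.denominator_pos

lemma scaledCoord_cast : (R.scaledCoord M v i : ℝ) = R.denominator * R.coord M i (toR v) :=
  (R.exists_int M i v).choose_spec.symm

lemma scaledCoord_add :
    R.scaledCoord M (v + b) i = R.scaledCoord M v i + R.scaledCoord M b i := by
  rify
  simp only [scaledCoord_cast, toR_add, map_add, mul_add]

lemma scaledCoord_nonneg : 0 ≤ R.scaledCoord M v i ↔ 0 ≤ R.coord M i (toR v) := by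
  rw [← Int.cast_nonneg_iff (R := ℝ), scaledCoord_cast,
    mul_nonneg_iff_of_pos_left R.denominator_cast_pos]

lemma scaledCoord_pos : 0 < R.scaledCoord M v i ↔ 0 < R.coord M i (toR v) := by
  rw [← Int.cast_pos (R := ℝ), scaledCoord_cast, mul_pos_iff_of_pos_left R.denominator_cast_pos]

lemma scaledCoord_eq_zero : R.scaledCoord M v i = 0 ↔ R.coord M i (toR v) = 0 := by
  rw [← Int.cast_eq_zero (α := ℝ), scaledCoord_cast,
    mul_eq_zero_iff_left R.denominator_cast_pos.ne']

lemma scaledCoord_injective : Function.Injective (R.scaledCoord M) := fun v v' h => by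
  refine toR_injective ((R.basis M).ext_elem fun i => ?_)
  have hcast := congrArg (Int.cast (R := ℝ)) (congrFun h i)
  rw [scaledCoord_cast, scaledCoord_cast] at hcast
  exact mul_left_cancel₀ R.denominator_cast_pos.ne' hcast

lemma sum_scaledCoord_cast :
    ((∑ i, R.scaledCoord M v i : ℤ) : ℝ) = R.denominator * R.functional M (toR v) := by
  simp only [Int.cast_sum, scaledCoord_cast, functional_eq_sum, Finset.mul_sum]

end ScaledCoordinates

section Weight

/-- The Newton function, scaled so as to take integral values on the exponents. -/
noncomputable def newtonWeight (v : Fin n →₀ ℕ) : ℤ := ∑ i, R.scaledCoord (R.facetOf v) v i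

/-- The rank of a facet when the facets are ordered by the values of their functionals at the
generic direction. -/
noncomputable def rank (M : R.ι) : ℤ :=
  open Classical in
  (Finset.univ.filter fun M' => R.functional M' R.direction < R.functional M R.direction).card

/-- The Newton weight refined by the rank of the sector. Multiplication by a monomial of `f` raises
it by at most `R.shift`, with equality only if the sector does not change. -/
noncomputable def weight (v : Fin n →₀ ℕ) : ℤ :=
  Fintype.card R.ι * R.newtonWeight v + R.rank (R.facetOf v)

/-- The largest amount by which a monomial of `f` raises the refined weight. -/
def shift : ℤ := Fintype.card R.ι * R.denominator

variable {R} {M M' : R.ι} {v v' b : Fin n →₀ ℕ}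

lemma newtonWeight_cast : (R.newtonWeight v : ℝ) = R.denominator * nu f (toR v) := by
  rw [newtonWeight, sum_scaledCoord_cast, ← nu_eq_functional (R.mem_sector_facetOf v).1]

lemma newtonWeight_nonneg : 0 ≤ R.newtonWeight v :=
  Finset.sum_nonneg fun i _ => scaledCoord_nonneg.mpr ((R.mem_sector_facetOf v).1 i)

lemma rank_nonneg : 0 ≤ R.rank M := Int.natCast_nonneg _

lemma rank_lt_card : R.rank M < Fintype.card R.ι := by
  classical
  refine Int.ofNat_lt.mpr ((Finset.card_lt_card ?_).trans_eq Finset.card_univ)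
  exact Finset.filter_ssubset.mpr ⟨M, Finset.mem_univ M, lt_irrefl _⟩

lemma rank_lt_rank (h : R.functional M R.direction < R.functional M' R.direction) :
    R.rank M < R.rank M' := by
  classical
  refine Int.ofNat_lt.mpr (Finset.card_lt_card (Finset.ssubset_iff_of_subset ?_ |>.mpr ⟨M, ?_⟩))
  · exact Finset.monotone_filter_right _ fun _ _ hlt => hlt.trans h
  · simpa using h

lemma rank_injective : Function.Injective R.rank := fun M M' h => by
  refine R.isGeneric.injective ?_
  by_contra hne
  rcases lt_or_gt_of_ne hne with hlt | hlt
  · exact (rank_lt_rank hlt).ne h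
  · exact (rank_lt_rank hlt).ne' h

lemma rank_le_rank_facetOf (h : toR v ∈ R.cone M) : R.rank M ≤ R.rank (R.facetOf v) := by
  rcases (functional_le_of_mem_sector (R.mem_sector_facetOf v) h).eq_or_lt with heq | hlt
  · rw [R.isGeneric.injective heq]
  · exact (rank_lt_rank hlt).le

lemma toR_add_mem_sector (hv : toR v ∈ R.sector R.direction M) (hb : toR b ∈ R.cone M) :
    toR (v + b) ∈ R.sector R.direction M := by
  rw [toR_add]
  exact ⟨add_mem hv.1 hb, fun i hi => by
    rw [map_add]
    exact add_pos_of_pos_of_nonneg (hv.2 i hi) (hb i)⟩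

lemma facetOf_add (hb : b ∈ f.support) (h : R.functional (R.facetOf v) (toR b) = 1) :
    R.facetOf (v + b) = R.facetOf v :=
  R.facetOf_eq (toR_add_mem_sector (R.mem_sector_facetOf v) (toR_mem_cone hb h))

lemma newtonWeight_add_cast : (R.newtonWeight (v + b) : ℝ) =
    R.denominator * (R.functional (R.facetOf (v + b)) (toR v) +
      R.functional (R.facetOf (v + b)) (toR b)) := by
  rw [newtonWeight_cast, nu_eq_functional (R.mem_sector_facetOf (v + b)).1, toR_add, map_add]

lemma newtonWeight_add_le (hb : b ∈ f.support) :
    R.newtonWeight (v + b) ≤ R.newtonWeight v + R.denominator := by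
  rify
  rw [newtonWeight_add_cast, newtonWeight_cast, ← mul_add_one]
  exact mul_le_mul_of_nonneg_left (add_le_add (functional_le_nu _ (toR_nonneg v))
    (functional_toR_le_one _ hb)) (Nat.cast_nonneg _)

lemma functional_facetOf_add_eq (hb : b ∈ f.support)
    (h : R.newtonWeight (v + b) = R.newtonWeight v + R.denominator) :
    R.functional (R.facetOf (v + b)) (toR v) = nu f (toR v) ∧
      R.functional (R.facetOf (v + b)) (toR b) = 1 := by
  rify at h
  rw [newtonWeight_add_cast, newtonWeight_cast, ← mul_add_one] at h
  exact (add_eq_add_iff_eq_and_eq (functional_le_nu _ (toR_nonneg v))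
    (functional_toR_le_one _ hb)).mp (mul_left_cancel₀ R.denominator_cast_pos.ne' h)

lemma weight_add_eq (hb : b ∈ f.support) (h : R.functional (R.facetOf v) (toR b) = 1) :
    R.weight (v + b) = R.weight v + R.shift := by
  have hadd : R.newtonWeight (v + b) = R.newtonWeight v + R.denominator := by
    rify
    rw [newtonWeight_add_cast, facetOf_add hb h, h, newtonWeight_cast,
      nu_eq_functional (R.mem_sector_facetOf v).1, mul_add_one]
  rw [weight, weight, shift, facetOf_add hb h, hadd]
  ring

lemma weight_add_lt (hb : b ∈ f.support) (h : R.functional (R.facetOf v) (toR b) ≠ 1) :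
    R.weight (v + b) < R.weight v + R.shift := by
  rw [weight, weight, shift]
  rcases (newtonWeight_add_le hb).eq_or_lt with heq | hlt
  · obtain ⟨hv, hb₁⟩ := functional_facetOf_add_eq hb heq
    have hrank := rank_le_rank_facetOf (mem_cone_of_functional_eq_nu (toR_nonneg v) hv)
    have hne : R.rank (R.facetOf (v + b)) ≠ R.rank (R.facetOf v) := fun hrank =>
      h (rank_injective hrank ▸ hb₁)
    rw [heq]
    linarith [lt_of_le_of_ne hrank hne]
  · have hmul := mul_le_mul_of_nonneg_left (Int.add_one_le_iff.mpr hlt)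
      (Int.natCast_nonneg (Fintype.card R.ι))
    linarith [rank_lt_card (M := R.facetOf (v + b)), rank_nonneg (M := R.facetOf v)]

lemma weight_add_le (hb : b ∈ f.support) : R.weight (v + b) ≤ R.weight v + R.shift := by
  by_cases h : R.functional (R.facetOf v) (toR b) = 1
  · exact (weight_add_eq hb h).le
  · exact (weight_add_lt hb h).le

variable (R) in
/-- The residue of the level `m` modulo the number of facets is that of the weights of the exponents
in the sector of `M`. -/
def IsLevel (M : R.ι) (m : ℤ) : Prop := m ≡ R.rank M [ZMOD Fintype.card R.ι]

lemma isLevel_weight (v : Fin n →₀ ℕ) : R.IsLevel (R.facetOf v) (R.weight v) := by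
  rw [IsLevel, weight]
  exact Int.modEq_iff_dvd.mpr ⟨-R.newtonWeight v, by ring⟩

lemma IsLevel.facetOf_eq (h : R.IsLevel M (R.weight v)) : R.facetOf v = M :=
  rank_injective <| by
    have hmod := (isLevel_weight v).symm.trans h
    rwa [Int.ModEq, Int.emod_eq_of_lt rank_nonneg rank_lt_card,
      Int.emod_eq_of_lt rank_nonneg rank_lt_card] at hmod

lemma IsLevel.sub_shift {m : ℤ} (h : R.IsLevel M m) : R.IsLevel M (m - R.shift) := by
  refine Int.ModEq.trans ?_ h
  exact Int.modEq_iff_dvd.mpr ⟨R.denominator, by rw [shift]; ring⟩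

end Weight

section SectorExponents

/-- The exponent of a point of the cone over `M` in scaled coordinates. -/
noncomputable def coneExponent (M : R.ι) (b : Fin n →₀ ℕ) : Fin n →₀ ℕ :=
  Finsupp.equivFunOnFinite.symm fun i => (R.scaledCoord M b i).toNat

open Classical in
/-- The exponent of a point of the sector of `M` in scaled coordinates, shifted so that the sector
becomes the whole set of exponents with a lattice condition. -/
noncomputable def sectorExponent (M : R.ι) (v : Fin n →₀ ℕ) : Fin n →₀ ℕ :=
  Finsupp.equivFunOnFinite.symm fun i =>
    (R.scaledCoord M v i - if R.coord M i R.direction < 0 then 1 else 0).toNat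

variable {R} {M : R.ι} {v b : Fin n →₀ ℕ}

lemma coneExponent_cast (hb : toR b ∈ R.cone M) (i : Fin n) :
    (R.coneExponent M b i : ℤ) = R.scaledCoord M b i :=
  Int.toNat_of_nonneg (scaledCoord_nonneg.mpr (hb i))

open Classical in
lemma sectorExponent_cast (hv : toR v ∈ R.sector R.direction M) (i : Fin n) :
    (R.sectorExponent M v i : ℤ) =
      R.scaledCoord M v i - if R.coord M i R.direction < 0 then 1 else 0 := by
  refine Int.toNat_of_nonneg ?_
  split_ifs with hi
  · exact Int.sub_nonneg.mpr (scaledCoord_pos.mpr (hv.2 i hi))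
  · rw [sub_zero]
    exact scaledCoord_nonneg.mpr (hv.1 i)

lemma sectorExponent_injOn :
    Set.InjOn (R.sectorExponent M) {v | toR v ∈ R.sector R.direction M} := by
  intro v hv v' hv' h
  refine scaledCoord_injective (M := M) (funext fun i => ?_)
  have hi := sectorExponent_cast hv i
  rw [h, sectorExponent_cast hv' i] at hi
  exact (sub_left_injective hi).symm

lemma sectorExponent_add (hv : toR v ∈ R.sector R.direction M) (hb : toR b ∈ R.cone M) :
    R.sectorExponent M (v + b) = R.sectorExponent M v + R.coneExponent M b := by
  ext i
  zify
  rw [sectorExponent_cast (toR_add_mem_sector hv hb), Pi.add_apply, Nat.cast_add,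
    sectorExponent_cast hv, coneExponent_cast hb, scaledCoord_add]
  ring

lemma le_of_coneExponent_le (hv : toR v ∈ R.sector R.direction M) (hb : toR b ∈ R.cone M)
    (hle : R.coneExponent M b ≤ R.sectorExponent M v) :
    b ≤ v ∧ toR (v - b) ∈ R.sector R.direction M := by
  classical
  have hcoord (i : Fin n) : R.scaledCoord M b i ≤
      R.scaledCoord M v i - if R.coord M i R.direction < 0 then 1 else 0 := by
    rw [← coneExponent_cast hb, ← sectorExponent_cast hv]
    exact_mod_cast hle i
  have hcone : toR v - toR b ∈ R.cone M := fun i => by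
    have hi : R.scaledCoord M b i ≤ R.scaledCoord M v i :=
      (hcoord i).trans (sub_le_self _ (by split_ifs <;> norm_num))
    rify at hi
    rw [scaledCoord_cast, scaledCoord_cast] at hi
    exact (sub_nonneg.mpr (le_of_mul_le_mul_left hi R.denominator_cast_pos)).trans_eq
      (map_sub (R.coord M i) _ _).symm
  have hbv : b ≤ v := fun i => Nat.cast_le.mp (sub_nonneg.mp (nonneg_of_mem_cone hcone i))
  have hadd := tsub_add_cancel_of_le hbv
  have hsub : toR (v - b) = toR v - toR b := by rw [eq_sub_iff_add_eq, ← toR_add, hadd]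
  refine ⟨hbv, hsub ▸ hcone, fun i hi => scaledCoord_pos.mp ?_⟩
  have hi' := hcoord i
  rw [if_pos hi, ← hadd, scaledCoord_add] at hi'
  omega

end SectorExponents

end RefinedFan

/-! ### Symbols of the logarithmic derivatives -/

section LogDeriv

variable {n : ℕ}

/-- The logarithmic derivatives `uᵢ ∂f/∂uᵢ`. -/
noncomputable def logDeriv (f : MvPolynomial (Fin n) ℂ) (i : Fin n) : MvPolynomial (Fin n) ℂ :=
  X i * pderiv i f

/-- The coefficient of `u^b` in the linear combination `∑ cᵢ uᵢ ∂f/∂uᵢ`. -/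
noncomputable def logDerivCoeff (f : MvPolynomial (Fin n) ℂ) (c : Fin n → ℂ) (b : Fin n →₀ ℕ) : ℂ :=
  (∑ i, c i * (b i : ℂ)) * f.coeff b

variable (f : MvPolynomial (Fin n) ℂ)

lemma logDeriv_eq_sum (i : Fin n) :
    logDeriv f i = ∑ b ∈ f.support, monomial b ((b i : ℂ) * f.coeff b) := by
  conv_lhs => rw [logDeriv, f.as_sum, map_sum, Finset.mul_sum]
  refine Finset.sum_congr rfl fun b _ => ?_
  rw [X_mul_pderiv_monomial, smul_monomial, nsmul_eq_mul]

lemma linearCombination_sum_monomial (φ : (Fin n →₀ ℕ) → Fin n →₀ ℕ)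
    (S : Finset (Fin n →₀ ℕ)) (c : Fin n → ℂ) :
    Fintype.linearCombination ℂ
        (fun i => ∑ b ∈ S, monomial (φ b) ((b i : ℂ) * f.coeff b)) c =
      ∑ b ∈ S, monomial (φ b) (logDerivCoeff f c b) := by
  simp only [Fintype.linearCombination_apply, Finset.smul_sum, smul_monomial]
  rw [Finset.sum_comm]
  refine Finset.sum_congr rfl fun b _ => ?_
  rw [← map_sum, logDerivCoeff, Finset.sum_mul]
  simp only [smul_eq_mul, mul_assoc]

lemma linearCombination_logDeriv (c : Fin n → ℂ) :
    Fintype.linearCombination ℂ (logDeriv f) c =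
      ∑ b ∈ f.support, monomial b (logDerivCoeff f c b) := by
  rw [funext (logDeriv_eq_sum f)]
  exact linearCombination_sum_monomial f id _ c

end LogDeriv

namespace RefinedFan

open FacetFan

variable {n : ℕ} {f : MvPolynomial (Fin n) ℂ} (R : RefinedFan f)

section Filtration

variable {R} in
lemma weight_nonneg {v : Fin n →₀ ℕ} : 0 ≤ R.weight v :=
  add_nonneg (mul_nonneg (Int.natCast_nonneg _) newtonWeight_nonneg) rank_nonneg

variable {R} in
lemma newtonWeight_le_weight {v : Fin n →₀ ℕ} : R.newtonWeight v ≤ R.weight v := by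
  have hcard : (1 : ℤ) ≤ Fintype.card R.ι :=
    Int.add_one_le_iff.mpr (rank_nonneg.trans_lt (rank_lt_card (M := R.facetOf v)))
  exact (le_mul_of_one_le_left newtonWeight_nonneg hcard).trans
    (le_add_of_nonneg_right rank_nonneg)

lemma finite_weight_le (m : ℤ) : {v | R.weight v ≤ m}.Finite := by
  refine ((R.finite_nu_le (m / R.denominator)).preimage DFunLike.coe_injective.injOn).subset
    fun v hv => ?_
  have hle : R.newtonWeight v ≤ m := newtonWeight_le_weight.trans hv
  rify at hle
  rw [newtonWeight_cast] at hle
  exact (le_div_iff₀' R.denominator_cast_pos).mpr hle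

/-- The filtration of the polynomial ring by the refined Newton weight. -/
noncomputable def filtration (m : ℤ) : Submodule ℂ (MvPolynomial (Fin n) ℂ) :=
  restrictSupport ℂ {v | R.weight v ≤ m}

variable {R} {m m' : ℤ} {g : MvPolynomial (Fin n) ℂ}

lemma mem_filtration : g ∈ R.filtration m ↔ ∀ v ∈ g.support, R.weight v ≤ m :=
  mem_restrictSupport_iff _

lemma coeff_eq_zero_of_lt_weight {v : Fin n →₀ ℕ} (hg : g ∈ R.filtration m)
    (hv : m < R.weight v) : coeff v g = 0 :=
  notMem_support_iff.mp fun h => hv.not_ge (mem_filtration.mp hg v h)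

lemma monomial_mem_filtration {v : Fin n →₀ ℕ} (h : R.weight v ≤ m) (a : ℂ) :
    monomial v a ∈ R.filtration m :=
  mem_filtration.mpr fun v' hv' => by
    rwa [Finset.mem_singleton.mp (support_monomial_subset hv')]

lemma mem_filtration_sub_one (hg : g ∈ R.filtration m)
    (h : ∀ v, R.weight v = m → coeff v g = 0) : g ∈ R.filtration (m - 1) :=
  mem_filtration.mpr fun v hv => Int.le_sub_one_iff.mpr <|
    (mem_filtration.mp hg v hv).lt_of_ne fun hvm => mem_support_iff.mp hv (h v hvm)

lemma filtration_mono : Monotone R.filtration := fun _ _ h =>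
  restrictSupport_mono ℂ fun _ hv => le_trans hv h

lemma filtration_eq_bot_of_neg (hm : m < 0) : R.filtration m = ⊥ :=
  (Submodule.eq_bot_iff _).mpr fun g hg => by
    ext v
    exact coeff_eq_zero_of_lt_weight hg (hm.trans_le weight_nonneg)

variable (R) in
lemma exists_mem_filtration (g : MvPolynomial (Fin n) ℂ) : ∃ m, g ∈ R.filtration m :=
  ⟨∑ v ∈ g.support, R.weight v, mem_filtration.mpr fun _ hv =>
    Finset.single_le_sum (fun _ _ => weight_nonneg) hv⟩

lemma linearCombination_logDeriv_mul_mem (c : Fin n → ℂ) (hg : g ∈ R.filtration m) :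
    Fintype.linearCombination ℂ (logDeriv f) c * g ∈ R.filtration (m + R.shift) := by
  rw [linearCombination_logDeriv, g.as_sum, Finset.sum_mul_sum]
  refine Submodule.sum_mem _ fun b hb => Submodule.sum_mem _ fun v hv => ?_
  rw [monomial_mul, add_comm b]
  exact monomial_mem_filtration
    ((weight_add_le hb).trans (add_le_add_left (mem_filtration.mp hg v hv) _)) _

end Filtration

section Symbols

open Classical in
/-- The principal part of `uᵢ ∂f/∂uᵢ` along the facet `M`, in the scaled coordinates of the cone
over `M`. -/
noncomputable def facetForm (M : R.ι) (i : Fin n) : MvPolynomial (Fin n) ℂ :=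
  ∑ b ∈ f.support with R.functional M (toR b) = 1,
    monomial (R.coneExponent M b) ((b i : ℂ) * f.coeff b)

open Classical in
/-- The part of weight `m` of a polynomial, as a polynomial in the shifted scaled coordinates of
the sector of `M`. -/
noncomputable def symbol (M : R.ι) (m : ℤ) :
    MvPolynomial (Fin n) ℂ →ₗ[ℂ] MvPolynomial (Fin n) ℂ :=
  (basisMonomials (Fin n) ℂ).constr ℂ
    fun v => if R.weight v = m then monomial (R.sectorExponent M v) 1 else 0

open Classical in
/-- The polynomial supported in weight `m` with a given symbol; monomials that are not the symbol
of anything of weight `m` are dropped. -/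
noncomputable def symbolLift (M : R.ι) (m : ℤ) :
    MvPolynomial (Fin n) ℂ →ₗ[ℂ] MvPolynomial (Fin n) ℂ :=
  ∑ v ∈ (R.finite_weight_le m).toFinset with R.weight v = m,
    monomial v ∘ₗ lcoeff ℂ (R.sectorExponent M v)

variable {R} {M : R.ι} {m m' : ℤ} {v b : Fin n →₀ ℕ} {g : MvPolynomial (Fin n) ℂ}

open Classical in
lemma linearCombination_facetForm (M : R.ι) (c : Fin n → ℂ) :
    Fintype.linearCombination ℂ (R.facetForm M) c =
      ∑ b ∈ f.support with R.functional M (toR b) = 1,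
        monomial (R.coneExponent M b) (logDerivCoeff f c b) :=
  linearCombination_sum_monomial f (R.coneExponent M) _ c

open Classical in
lemma symbol_monomial (M : R.ι) (m : ℤ) (v : Fin n →₀ ℕ) (a : ℂ) :
    R.symbol M m (monomial v a) =
      if R.weight v = m then monomial (R.sectorExponent M v) a else 0 := by
  have hbasis : monomial v a = a • basisMonomials (Fin n) ℂ v := by
    rw [coe_basisMonomials, smul_monomial, smul_eq_mul, mul_one]
  rw [hbasis, map_smul, symbol, Module.Basis.constr_basis, smul_ite, smul_zero, smul_monomial,
    smul_eq_mul, mul_one]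

lemma symbol_eq_zero (hg : g ∈ R.filtration m') (hm : m' < m) : R.symbol M m g = 0 := by
  rw [g.as_sum, map_sum]
  refine Finset.sum_eq_zero fun v hv => ?_
  rw [symbol_monomial, if_neg ((mem_filtration.mp hg v hv).trans_lt hm).ne]

open Classical in
lemma coeff_symbolLift (M : R.ι) (m : ℤ) (h : MvPolynomial (Fin n) ℂ) (v : Fin n →₀ ℕ) :
    coeff v (R.symbolLift M m h) =
      if R.weight v = m then coeff (R.sectorExponent M v) h else 0 := by
  simp only [symbolLift, LinearMap.coe_sum, Finset.sum_apply, LinearMap.comp_apply, coeff_sum,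
    coeff_monomial, lcoeff_apply, Finset.sum_ite_eq', Finset.mem_filter, Set.Finite.mem_toFinset,
    Set.mem_ofPred_eq]
  exact if_congr ⟨And.right, fun h => ⟨h.le, h⟩⟩ rfl rfl

lemma symbolLift_mem (M : R.ι) (m : ℤ) (h : MvPolynomial (Fin n) ℂ) :
    R.symbolLift M m h ∈ R.filtration m :=
  mem_filtration.mpr fun v hv => by
    by_contra hvm
    exact mem_support_iff.mp hv (by rw [coeff_symbolLift, if_neg (not_le.mp hvm).ne'])

lemma IsLevel.mem_sector (hM : R.IsLevel M m) (hv : R.weight v = m) :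
    toR v ∈ R.sector R.direction M := by
  subst hv
  exact hM.facetOf_eq ▸ R.mem_sector_facetOf v

lemma IsLevel.weight_add_eq_iff (hM : R.IsLevel M m) (hv : R.weight v = m) (hb : b ∈ f.support) :
    R.weight (v + b) = m + R.shift ↔ R.functional M (toR b) = 1 := by
  subst hv
  rw [← hM.facetOf_eq]
  refine ⟨fun h => ?_, weight_add_eq hb⟩
  by_contra hne
  exact (weight_add_lt hb hne).ne h

theorem symbol_linearCombination_logDeriv_mul (hM : R.IsLevel M m) (c : Fin n → ℂ)
    (hg : g ∈ R.filtration m) :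
    R.symbol M (m + R.shift) (Fintype.linearCombination ℂ (logDeriv f) c * g) =
      Fintype.linearCombination ℂ (R.facetForm M) c * R.symbol M m g := by
  classical
  rw [g.as_sum, Finset.mul_sum, map_sum, map_sum, Finset.mul_sum]
  refine Finset.sum_congr rfl fun v hv => ?_
  rw [linearCombination_logDeriv, linearCombination_facetForm, Finset.sum_mul, map_sum,
    symbol_monomial, Finset.sum_mul, Finset.sum_filter]
  refine Finset.sum_congr rfl fun b hb => ?_
  rw [monomial_mul, symbol_monomial, add_comm b v]
  rcases (mem_filtration.mp hg v hv).eq_or_lt with hvm | hvm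
  · simp only [hM.weight_add_eq_iff hvm hb, if_pos hvm, monomial_mul]
    refine ite_congr rfl (fun hb₁ => ?_) fun _ => rfl
    rw [sectorExponent_add (hM.mem_sector hvm) (toR_mem_cone hb hb₁), add_comm]
  · rw [if_neg ((weight_add_le hb).trans_lt (by gcongr)).ne, if_neg hvm.ne, mul_zero, ite_self]

lemma IsLevel.weight_tsub_eq_iff (hM : R.IsLevel M m) (hv : R.weight v = m)
    (hb : b ∈ f.support) : (b ≤ v ∧ R.weight (v - b) = m - R.shift) ↔
      R.functional M (toR b) = 1 ∧ R.coneExponent M b ≤ R.sectorExponent M v := by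
  constructor
  · rintro ⟨hbv, hw⟩
    have hb₁ : R.functional M (toR b) = 1 := by
      rw [← hM.sub_shift.weight_add_eq_iff hw hb, tsub_add_cancel_of_le hbv, hv, sub_add_cancel]
    refine ⟨hb₁, ?_⟩
    rw [← tsub_add_cancel_of_le hbv,
      sectorExponent_add (hM.sub_shift.mem_sector hw) (toR_mem_cone hb hb₁)]
    exact le_add_self
  · rintro ⟨hb₁, hle⟩
    obtain ⟨hbv, hsector⟩ :=
      le_of_coneExponent_le (hM.mem_sector hv) (toR_mem_cone hb hb₁) hle
    have hw := weight_add_eq hb (v := v - b) (by rwa [R.facetOf_eq hsector])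
    rw [tsub_add_cancel_of_le hbv, hv] at hw
    exact ⟨hbv, eq_sub_of_add_eq hw.symm⟩

lemma IsLevel.sectorExponent_tsub (hM : R.IsLevel M m) (hb : b ∈ f.support) (hbv : b ≤ v)
    (hw : R.weight (v - b) = m) (hb₁ : R.functional M (toR b) = 1) :
    R.sectorExponent M (v - b) = R.sectorExponent M v - R.coneExponent M b := by
  rw [← add_tsub_cancel_right (R.sectorExponent M (v - b)) (R.coneExponent M b),
    ← sectorExponent_add (hM.mem_sector hw) (toR_mem_cone hb hb₁), tsub_add_cancel_of_le hbv]

theorem symbolLift_mul_sub_mem (hM : R.IsLevel M m) (c : Fin n → ℂ)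
    (h : MvPolynomial (Fin n) ℂ) :
    R.symbolLift M m (Fintype.linearCombination ℂ (R.facetForm M) c * h) -
      Fintype.linearCombination ℂ (logDeriv f) c * R.symbolLift M (m - R.shift) h ∈
        R.filtration (m - 1) := by
  classical
  refine mem_filtration_sub_one (sub_mem (symbolLift_mem _ _ _) ?_) fun v hv => ?_
  · simpa only [sub_add_cancel] using
      linearCombination_logDeriv_mul_mem c (symbolLift_mem M (m - R.shift) h)
  rw [coeff_sub, coeff_symbolLift, if_pos hv, linearCombination_logDeriv,
    linearCombination_facetForm, Finset.sum_mul, Finset.sum_mul, coeff_sum, coeff_sum,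
    Finset.sum_filter, sub_eq_zero]
  refine Finset.sum_congr rfl fun b hb => ?_
  rw [coeff_monomial_mul', coeff_monomial_mul', coeff_symbolLift, mul_ite, mul_zero, ← ite_and,
    ← ite_and]
  refine ite_congr (propext (hM.weight_tsub_eq_iff hv hb).symm) (fun hbv => ?_) fun _ => rfl
  rw [hM.sub_shift.sectorExponent_tsub hb hbv.1 hbv.2 ((hM.weight_tsub_eq_iff hv hb).mp hbv).1]

theorem sub_symbolLift_symbol_mem (hM : R.IsLevel M m) (hg : g ∈ R.filtration m) :
    g - R.symbolLift M m (R.symbol M m g) ∈ R.filtration (m - 1) := by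
  classical
  refine mem_filtration_sub_one (sub_mem hg (symbolLift_mem _ _ _)) fun v hv => ?_
  have hcoeff (v' : Fin n →₀ ℕ) (a : ℂ) :
      coeff (R.sectorExponent M v) (R.symbol M m (monomial v' a)) = coeff v (monomial v' a) := by
    rw [symbol_monomial, coeff_monomial]
    split_ifs with hv' heq heq
    · rw [heq, coeff_monomial, if_pos rfl]
    · rw [coeff_monomial, if_neg fun h =>
        heq (sectorExponent_injOn (hM.mem_sector hv') (hM.mem_sector hv) h)]
    · exact absurd (heq ▸ hv) hv'
    · rw [coeff_zero]
  rw [coeff_sub, coeff_symbolLift, if_pos hv, sub_eq_zero]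
  conv_rhs => rw [g.as_sum, map_sum, coeff_sum]
  simp only [hcoeff]
  rw [← coeff_sum, ← g.as_sum]

end Symbols

section IsFilteredRegular

variable {R} {c : ℕ → Fin n → ℂ}

lemma exists_lift_of_isWeaklyRegular {M : R.ι} {k : ℕ} {m : ℤ} (hk : k < n)
    (hreg : RingTheory.Sequence.IsWeaklyRegular (MvPolynomial (Fin n) ℂ)
      ((List.range n).map fun j => Fintype.linearCombination ℂ (R.facetForm M) (c j)))
    (hM : R.IsLevel M m) {g : MvPolynomial (Fin n) ℂ} {g' : ℕ → MvPolynomial (Fin n) ℂ}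
    (hg : g ∈ R.filtration m) (hg' : ∀ i < k, g' i ∈ R.filtration m)
    (hL : Fintype.linearCombination ℂ (logDeriv f) (c k) * g -
      ∑ i ∈ Finset.range k, Fintype.linearCombination ℂ (logDeriv f) (c i) * g' i ∈
        R.filtration (m + R.shift - 1)) :
    ∃ h : ℕ → MvPolynomial (Fin n) ℂ, (∀ i < k, h i ∈ R.filtration (m - R.shift)) ∧
      g - ∑ i ∈ Finset.range k, Fintype.linearCombination ℂ (logDeriv f) (c i) * h i ∈
        R.filtration (m - 1) := by
  have hsymbol : Fintype.linearCombination ℂ (R.facetForm M) (c k) * R.symbol M m g =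
      ∑ i ∈ Finset.range k,
        Fintype.linearCombination ℂ (R.facetForm M) (c i) * R.symbol M m (g' i) := by
    have hzero := symbol_eq_zero (M := M) hL (sub_one_lt _)
    rw [map_sub, map_sum, symbol_linearCombination_logDeriv_mul hM _ hg, sub_eq_zero] at hzero
    exact hzero.trans (Finset.sum_congr rfl fun i hi =>
      symbol_linearCombination_logDeriv_mul hM _ (hg' i (Finset.mem_range.mp hi)))
  obtain ⟨q, hq⟩ := mem_prefixIdeal_iff.mp
    (mem_prefixIdeal_of_mul_mem hreg hk (mem_prefixIdeal_iff.mpr ⟨_, hsymbol⟩))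
  refine ⟨fun i => R.symbolLift M (m - R.shift) (q i), fun _ _ => symbolLift_mem _ _ _, ?_⟩
  have hlift := sub_symbolLift_symbol_mem hM hg
  rw [hq, map_sum] at hlift
  have hsum := add_mem hlift (Submodule.sum_mem _ fun i (_ : i ∈ Finset.range k) =>
    symbolLift_mul_sub_mem hM (c i) (q i))
  rwa [Finset.sum_sub_distrib, sub_add_sub_cancel] at hsum

theorem isFilteredRegular
    (hreg : ∀ M, RingTheory.Sequence.IsWeaklyRegular (MvPolynomial (Fin n) ℂ)
      ((List.range n).map fun j => Fintype.linearCombination ℂ (R.facetForm M) (c j))) :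
    IsFilteredRegular (fun k => Fintype.linearCombination ℂ (logDeriv f) (c k)) n R.filtration
      R.shift where
  mono := filtration_mono
  eq_bot_of_neg _ := filtration_eq_bot_of_neg
  exhaustive := R.exists_mem_filtration
  mul_mem _ _ _ := linearCombination_logDeriv_mul_mem _
  lift k hk m g g' hg hg' hL := by
    by_cases hv : ∃ v, R.weight v = m
    · obtain ⟨v, rfl⟩ := hv
      exact exists_lift_of_isWeaklyRegular hk (hreg _) (isLevel_weight v) hg hg' hL
    · refine ⟨0, fun _ _ => zero_mem _, ?_⟩
      simp only [Pi.zero_apply, mul_zero, Finset.sum_const_zero, sub_zero]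
      exact mem_filtration_sub_one hg fun v hvm => absurd ⟨v, hvm⟩ hv

end IsFilteredRegular

end RefinedFan

/-! ### Faces of the Newton boundary and nondegeneracy -/

lemma mem_convexHull_setOf_apply_eq {E : Type*} [AddCommGroup E] [Module ℝ E] {S : Set E}
    {l : E →ₗ[ℝ] ℝ} {c : ℝ} (hS : ∀ s ∈ S, l s ≤ c) {x : E} (hx : x ∈ convexHull ℝ S)
    (hlx : l x = c) : x ∈ convexHull ℝ {s ∈ S | l s = c} := by
  obtain ⟨ι, _, w, z, hw, hw₁, hz, rfl⟩ := mem_convexHull_iff_exists_fintype.mp hx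
  have hzero : ∑ i, w i * (c - l (z i)) = 0 := by
    simp only [map_sum, map_smul, smul_eq_mul] at hlx
    simp only [mul_sub, Finset.sum_sub_distrib, hlx, ← Finset.sum_mul, hw₁, one_mul, sub_self]
  have hterm := (Fintype.sum_eq_zero_iff_of_nonneg fun i =>
    mul_nonneg (hw i) (sub_nonneg.mpr (hS _ (hz i)))).mp hzero
  rw [← finsum_eq_sum_of_fintype] at hw₁ ⊢
  refine (convex_convexHull ℝ _).finsum_mem hw hw₁ fun i hi => subset_convexHull ℝ _ ⟨hz i, ?_⟩
  exact (sub_eq_zero.mp ((mul_eq_zero.mp (congrFun hterm i)).resolve_left hi)).symm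

lemma mem_convexHull_support_of_apply_eq {σ : Type*} {f : MvPolynomial σ ℂ}
    {l : (σ → ℝ) →ₗ[ℝ] ℝ} {c : ℝ} (hc : 0 < c) (hl : ∀ m ∈ f.support, l (toR m) ≤ c)
    {z : σ → ℝ} (hz : z ∈ newtonPolytope f) (hlz : l z = c) :
    z ∈ convexHull ℝ (toR '' {m | m ∈ f.support ∧ l (toR m) = c}) := by
  refine convexHull_mono ?_ (mem_convexHull_setOf_apply_eq ?_ hz hlz)
  · rintro _ ⟨rfl | ⟨m, hm, rfl⟩, hlm⟩
    · exact absurd ((map_zero l).symm.trans hlm) hc.ne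
    · exact ⟨m, ⟨hm, hlm⟩, rfl⟩
  · rintro _ (rfl | ⟨m, hm, rfl⟩)
    · exact (map_zero l).trans_le hc.le
    · exact hl m hm

namespace FacetFan

variable {n : ℕ} {f : MvPolynomial (Fin n) ℂ} (D : FacetFan f)

/-- The face of the facet `M` spanned by the vertices with indices in `J`. -/
def face (M : D.ι) (J : Finset (Fin n)) : Set (Fin n → ℝ) := convexHull ℝ (D.vertex M '' J)

variable {D} {M : D.ι} {J : Finset (Fin n)}

lemma vertex_mem_face {j : Fin n} (hj : j ∈ J) : D.vertex M j ∈ D.face M J :=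
  subset_convexHull ℝ _ ⟨j, hj, rfl⟩

lemma face_subset_newtonPolytope : D.face M J ⊆ newtonPolytope f :=
  convexHull_min (Set.image_subset_iff.mpr fun j _ => vertex_mem_newtonPolytope M j)
    convex_newtonPolytope

lemma apply_eq_of_mem_face {l : (Fin n → ℝ) →ₗ[ℝ] ℝ} {c : ℝ}
    (h : ∀ j ∈ J, l (D.vertex M j) = c) {z : Fin n → ℝ} (hz : z ∈ D.face M J) : l z = c :=
  convexHull_min (t := {z | l z = c}) (Set.image_subset_iff.mpr h)
    (convex_hyperplane l.isLinear c) hz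

lemma functional_eq_one_of_mem_face {z : Fin n → ℝ} (hz : z ∈ D.face M J) :
    D.functional M z = 1 :=
  apply_eq_of_mem_face (fun j _ => functional_vertex M j) hz

lemma coord_eq_zero_of_mem_face {z : Fin n → ℝ} (hz : z ∈ D.face M J) {i : Fin n} (hi : i ∉ J) :
    D.coord M i z = 0 :=
  apply_eq_of_mem_face (fun j hj => by
    rw [coord_vertex, if_neg (ne_of_mem_of_not_mem hj hi)]) hz

lemma zero_notMem_face : (0 : Fin n → ℝ) ∉ D.face M J := fun h => by
  simpa using functional_eq_one_of_mem_face h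

lemma mem_face_of_mem_cone {z : Fin n → ℝ} (hz : z ∈ D.cone M) (hz₁ : D.functional M z = 1)
    (hJ : ∀ i ∉ J, D.coord M i z = 0) : z ∈ D.face M J := by
  rw [functional_eq_sum, ← finsum_eq_sum_of_fintype] at hz₁
  rw [← sum_coord_smul_vertex M z, ← finsum_eq_sum_of_fintype]
  refine (convex_convexHull ℝ _).finsum_mem hz hz₁ fun i hi => vertex_mem_face ?_
  by_contra hiJ
  exact hi (hJ i hiJ)

lemma toR_mem_face_iff {m : Fin n →₀ ℕ} (hm : m ∈ f.support) : toR m ∈ D.face M J ↔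
    D.functional M (toR m) = 1 ∧ ∀ i ∉ J, D.coord M i (toR m) = 0 :=
  ⟨fun h => ⟨functional_eq_one_of_mem_face h, fun _ => coord_eq_zero_of_mem_face h⟩,
    fun h => mem_face_of_mem_cone (toR_mem_cone hm h.1) h.1 h.2⟩

open Filter Topology in
lemma exists_tilt (M : D.ι) (t : (Fin n → ℝ) →ₗ[ℝ] ℝ) :
    ∃ ε > 0, ∀ m ∈ f.support, D.functional M (toR m) < 1 →
      D.functional M (toR m) - ε * t (toR m) < 1 := by
  have hall : ∀ᶠ ε : ℝ in 𝓝[>] 0, ∀ m ∈ f.support, D.functional M (toR m) < 1 →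
      D.functional M (toR m) - ε * t (toR m) < 1 := by
    refine (eventually_all_finset f.support).mpr fun m _ => ?_
    by_cases hlt : D.functional M (toR m) < 1
    · have hcont : Continuous fun ε : ℝ => D.functional M (toR m) - ε * t (toR m) := by fun_prop
      have hev := hcont.continuousAt (x := 0) |>.eventually_lt_const (by simpa using hlt)
      exact (hev.filter_mono nhdsWithin_le_nhds).mono fun _ h _ => h
    · exact Eventually.of_forall fun _ h => absurd h hlt
  obtain ⟨ε, h, hε⟩ := (hall.and self_mem_nhdsWithin).exists
  exact ⟨ε, hε, h⟩

/- The functional of the facet, tilted slightly against the coordinates outside `J`, supports the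
polytope exactly along the face. -/
theorem isFace_face (hJ : J.Nonempty) : IsFace (newtonPolytope f) (D.face M J) := by
  obtain ⟨j, hj⟩ := hJ
  let t : (Fin n → ℝ) →ₗ[ℝ] ℝ := ∑ i ∈ Jᶜ, D.coord M i
  have ht (z : Fin n → ℝ) : t z = ∑ i ∈ Jᶜ, D.coord M i z := LinearMap.sum_apply _ _ _
  obtain ⟨ε, hε, htilt⟩ := exists_tilt M t
  let l := D.functional M - ε • t
  have hl (z : Fin n → ℝ) : l z = D.functional M z - ε * t z := rfl
  have hsupp (m) (hm : m ∈ f.support) : l (toR m) ≤ 1 ∧ (l (toR m) = 1 → toR m ∈ D.face M J) := by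
    rcases (functional_toR_le_one M hm).lt_or_eq with hlt | heq
    · exact ⟨(htilt m hm hlt).le, fun h => absurd h (htilt m hm hlt).ne⟩
    · have hnonneg (i) (_ : i ∈ Jᶜ) : 0 ≤ D.coord M i (toR m) := toR_mem_cone hm heq i
      rw [hl, heq, sub_le_self_iff, sub_eq_self, mul_eq_zero_iff_left hε.ne', ht,
        Finset.sum_eq_zero_iff_of_nonneg hnonneg]
      exact ⟨mul_nonneg hε.le (Finset.sum_nonneg hnonneg), fun h =>
        (toR_mem_face_iff hm).mpr ⟨heq, fun i hi => h i (Finset.mem_compl.mpr hi)⟩⟩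
  refine ⟨⟨_, vertex_mem_face hj⟩, l, 1, fun z =>
    le_of_mem_newtonPolytope zero_le_one fun m hm => (hsupp m hm).1, ?_⟩
  refine Set.Subset.antisymm (fun z hz => ⟨face_subset_newtonPolytope hz, ?_⟩) ?_
  · rw [hl, ht, functional_eq_one_of_mem_face hz, Finset.sum_eq_zero fun i hi =>
      coord_eq_zero_of_mem_face hz (Finset.mem_compl.mp hi), mul_zero, sub_zero]
  · rintro z ⟨hz, hlz⟩
    refine convexHull_min ?_ (convex_convexHull ℝ _) (mem_convexHull_support_of_apply_eq one_pos
      (fun m hm => (hsupp m hm).1) hz hlz)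
    rintro _ ⟨m, ⟨hm, hlm⟩, rfl⟩
    exact (hsupp m hm).2 hlm

lemma nbFace_face (hJ : J.Nonempty) : NBFace f (D.face M J) :=
  ⟨isFace_face hJ, zero_notMem_face⟩

end FacetFan

section FaceRestrict

variable {n : ℕ} (f : MvPolynomial (Fin n) ℂ)

lemma coeff_logDeriv (i : Fin n) (b : Fin n →₀ ℕ) :
    coeff b (logDeriv f i) = b i * f.coeff b := by
  classical
  rw [logDeriv_eq_sum, coeff_sum]
  simp only [coeff_monomial, Finset.sum_ite_eq', ite_eq_left_iff, notMem_support_iff]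
  intro h
  rw [h, mul_zero]

open Classical in
lemma faceRestrict_logDeriv (Δ : Set (Fin n → ℝ)) (i : Fin n) :
    faceRestrict Δ (logDeriv f i) =
      ∑ b ∈ f.support, if toR b ∈ Δ then monomial b (b i * f.coeff b) else 0 := by
  simp only [faceRestrict, coeff_logDeriv]
  refine Finset.sum_subset (fun b hb => ?_) fun b _ hb => ?_
  · rw [mem_support_iff, coeff_logDeriv] at hb
    exact mem_support_iff.mpr (right_ne_zero_of_mul hb)
  · rw [notMem_support_iff, coeff_logDeriv] at hb
    rw [hb, map_zero, ite_self]

end FaceRestrict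

lemma map_ofAdd_eq_prod {ι N : Type*} [Fintype ι] [CommMonoid N]
    (φ : Multiplicative (ι →₀ ℕ) →* N) (b : ι →₀ ℕ) :
    φ (.ofAdd b) = ∏ k, φ (.ofAdd (Finsupp.single k 1)) ^ b k := by
  conv_lhs => rw [← Finsupp.univ_sum_single b, ofAdd_sum, map_prod]
  refine Finset.prod_congr rfl fun k _ => ?_
  rw [← map_pow, ← ofAdd_nsmul, Finsupp.smul_single_one]

namespace RefinedFan

open FacetFan

variable {n : ℕ} {f : MvPolynomial (Fin n) ℂ} {R : RefinedFan f}

/- The scaled coordinates need not come from a substitution of monomials, but every point of the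
torus in these coordinates is the image of a point of the original torus, because a monoid
homomorphism is determined by its values on the generators. -/
lemma exists_ne_zero_prod_pow_eq (M : R.ι) {y : Fin n → ℂ} (hy : ∀ j, y j ≠ 0) :
    ∃ x : Fin n → ℂ, (∀ k, x k ≠ 0) ∧
      ∀ b : Fin n →₀ ℕ, ∏ k, x k ^ b k = ∏ j, y j ^ R.scaledCoord M b j := by
  let φ : Multiplicative (Fin n →₀ ℕ) →* ℂ :=
    { toFun b := ∏ j, y j ^ R.scaledCoord M b.toAdd j
      map_one' := Finset.prod_eq_one fun j _ => by
        rw [toAdd_one, scaledCoord_eq_zero.mpr (by rw [toR_zero, map_zero]), zpow_zero]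
      map_mul' a b := by
        simp only [toAdd_mul, scaledCoord_add, zpow_add₀ (hy _), Finset.prod_mul_distrib] }
  have hφ (b) : φ b ≠ 0 := by
    change ∏ j : Fin n, _ ≠ 0
    exact Finset.prod_ne_zero_iff.mpr fun j _ => zpow_ne_zero _ (hy j)
  exact ⟨fun k => φ (.ofAdd (Finsupp.single k 1)), fun k => hφ _,
    fun b => (map_ofAdd_eq_prod φ b).symm⟩

open Classical in
lemma exists_ne_zero_prod_pow_coneExponent_eq (M : R.ι) (y : Fin n → ℂ) :
    ∃ x : Fin n → ℂ, (∀ k, x k ≠ 0) ∧ ∀ b : Fin n →₀ ℕ, toR b ∈ R.cone M →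
      ∏ j, y j ^ R.coneExponent M b j =
        if ∀ j, y j = 0 → R.coord M j (toR b) = 0 then ∏ k, x k ^ b k else 0 := by
  obtain ⟨x, hx, hprod⟩ := exists_ne_zero_prod_pow_eq M (y := fun j => if y j = 0 then 1 else y j)
    fun j => by split_ifs with h <;> simp [h]
  refine ⟨x, hx, fun b hb => ?_⟩
  have hexp (j) : R.coneExponent M b j = 0 ↔ R.coord M j (toR b) = 0 := by
    rw [← scaledCoord_eq_zero, ← coneExponent_cast hb, Nat.cast_eq_zero]
  split_ifs with h
  · rw [hprod]
    refine Finset.prod_congr rfl fun j _ => ?_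
    rw [← coneExponent_cast hb, zpow_natCast]
    split_ifs with hj
    · rw [(hexp j).mpr (h j hj), pow_zero, pow_zero]
    · rfl
  · push Not at h
    obtain ⟨j, hj, hbj⟩ := h
    exact Finset.prod_eq_zero (Finset.mem_univ j)
      (by rw [hj, zero_pow (mt (hexp j).mp hbj)])

theorem eq_zero_of_eval_facetForm (hnd : Nondegenerate f) (M : R.ι) (y : Fin n → ℂ)
    (hy : ∀ i, eval y (R.facetForm M i) = 0) : y = 0 := by
  classical
  by_contra hy₀
  let J : Finset (Fin n) := {j | y j ≠ 0}
  have hJ : J.Nonempty := by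
    obtain ⟨j, hj⟩ := Function.ne_iff.mp hy₀
    exact ⟨j, Finset.mem_filter.mpr ⟨Finset.mem_univ j, hj⟩⟩
  obtain ⟨x, hx, hprod⟩ := exists_ne_zero_prod_pow_coneExponent_eq M y
  refine hnd (R.face M J) (nbFace_face hJ) ⟨x, hx, fun i => Eq.trans ?_ (hy i)⟩
  change eval x (faceRestrict _ (logDeriv f i)) = _
  rw [faceRestrict_logDeriv, facetForm, Finset.sum_filter, map_sum, map_sum]
  refine Finset.sum_congr rfl fun b hb => ?_
  have hface : toR b ∈ R.face M J ↔ R.functional M (toR b) = 1 ∧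
      ∀ j, y j = 0 → R.coord M j (toR b) = 0 := by
    simpa [J] using toR_mem_face_iff (M := M) (J := J) hb
  by_cases hb₁ : R.functional M (toR b) = 1
  · simp only [hface, hb₁, true_and, if_true, eval_monomial,
      Finsupp.prod_fintype _ _ fun _ => pow_zero _, hprod b (toR_mem_cone hb hb₁)]
    split_ifs <;> simp [eval_monomial, Finsupp.prod_fintype]
  · simp only [hface, hb₁, false_and, if_false, map_zero]

end RefinedFan

/-! ### The Hilbert function of the graded ring -/

section HilbertFunction

open Module

lemma fwdDiff_iter_comp_of_map_add {M M' G : Type*} [AddCommMonoid M] [AddCommMonoid M']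
    [AddCommGroup G] {h : M} {h' : M'} {φ : M → M'} (hφ : ∀ x, φ (x + h) = φ x + h') (F : M' → G)
    (k : ℕ) (x : M) : (fwdDiff h)^[k] (fun x => F (φ x)) x = (fwdDiff h')^[k] F (φ x) := by
  induction k generalizing x with
  | zero => rfl
  | succ k ih => rw [Function.iterate_succ_apply', Function.iterate_succ_apply', fwdDiff, fwdDiff,
      ih, ih, hφ]

lemma finrank_restrictSupport {σ K : Type*} [Field K] (s : Set (σ →₀ ℕ)) :
    finrank K (restrictSupport K s) = s.ncard :=
  finrank_eq_nat_card_basis (basisRestrictSupport K s)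

variable {n : ℕ} {f : MvPolynomial (Fin n) ℂ}

lemma prefixIdeal_linearCombination_eq_LIdeal {c : ℕ → Fin n → ℂ}
    (hc : LinearIndependent ℂ fun i : Fin n => c i) :
    prefixIdeal (fun k => Fintype.linearCombination ℂ (logDeriv f) (c k)) n = LIdeal f := by
  let L : (Fin n → ℂ) →ₗ[ℂ] MvPolynomial (Fin n) ℂ := Fintype.linearCombination ℂ (logDeriv f)
  have hmem (I : Ideal (MvPolynomial (Fin n) ℂ)) (s : Set (Fin n → ℂ))
      (hs : Submodule.span ℂ s = ⊤) (h : ∀ x ∈ s, L x ∈ I) (x : Fin n → ℂ) : L x ∈ I := by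
    have hle : Submodule.span ℂ s ≤ (I.restrictScalars ℂ).comap L := Submodule.span_le.mpr h
    exact hle (hs.ge trivial)
  refine le_antisymm (Ideal.span_le.mpr ?_) (Ideal.span_le.mpr ?_)
  · rintro _ ⟨k, -, rfl⟩
    refine hmem _ _ (Pi.basisFun ℂ (Fin n)).span_eq ?_ (c k)
    rintro _ ⟨i, rfl⟩
    rw [Pi.basisFun_apply, Fintype.linearCombination_apply_single, one_smul]
    exact Ideal.subset_span ⟨i, rfl⟩
  · rintro _ ⟨i, rfl⟩
    have hspan := hc.span_eq_top_of_card_eq_finrank' (by simp)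
    have hi := hmem (prefixIdeal (fun k => L (c k)) n) _ hspan ?_ (Pi.single i 1)
    · rwa [Fintype.linearCombination_apply_single, one_smul] at hi
    · rintro _ ⟨k, rfl⟩
      exact Ideal.subset_span ⟨k, k.2, rfl⟩

lemma linearCombination_logDeriv_ne_zero (hconv : Convenient f) {c : Fin n → ℂ} (hc : c ≠ 0) :
    Fintype.linearCombination ℂ (logDeriv f) c ≠ 0 := by
  classical
  obtain ⟨i, hi⟩ := Function.ne_iff.mp hc
  obtain ⟨k, hk, hfk⟩ := hconv i
  refine ne_zero_iff.mpr ⟨Finsupp.single i k, ?_⟩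
  rw [Fintype.linearCombination_apply, coeff_sum, Fintype.sum_eq_single i fun j hj => by
    rw [coeff_smul, coeff_logDeriv, Finsupp.single_eq_of_ne hj, Nat.cast_zero, zero_mul, smul_zero]]
  rw [coeff_smul, coeff_logDeriv, Finsupp.single_eq_same]
  exact smul_ne_zero hi
    (mul_ne_zero (Nat.cast_ne_zero.mpr (Nat.one_le_iff_ne_zero.mp hk)) hfk)

/-- The number of exponents of Newton weight `β`. -/
noncomputable def latticeCount (f : MvPolynomial (Fin n) ℂ) (β : ℝ) : ℕ :=
  {v : Fin n →₀ ℕ | nu f (toR v) = β}.ncard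

namespace RefinedFan

variable (R : RefinedFan f)

instance finiteDimensional_filtration (m : ℤ) : FiniteDimensional ℂ (R.filtration m) :=
  have : Finite {v | R.weight v ≤ m} := R.finite_weight_le m
  Module.Finite.of_basis (basisRestrictSupport ℂ _)

/-- The level at which the refined filtration is the part `ν ≤ β` of the Newton filtration. -/
noncomputable def level (β : ℝ) : ℤ := Fintype.card R.ι * (⌊R.denominator * β⌋ + 1) - 1

/-- The level at which the refined filtration is the part `ν < β` of the Newton filtration. -/
noncomputable def strictLevel (β : ℝ) : ℤ := Fintype.card R.ι * ⌈R.denominator * β⌉ - 1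

variable {R}

lemma weight_ediv_card {v : Fin n →₀ ℕ} : R.weight v / Fintype.card R.ι = R.newtonWeight v := by
  have hrank := rank_lt_card (M := R.facetOf v)
  rw [weight, add_comm, Int.add_mul_ediv_left _ _ (rank_nonneg.trans_lt hrank).ne',
    Int.ediv_eq_zero_of_lt rank_nonneg hrank, zero_add]

lemma weight_le_card_mul_sub_one {v : Fin n →₀ ℕ} {a : ℤ} :
    R.weight v ≤ Fintype.card R.ι * a - 1 ↔ R.newtonWeight v < a := by
  have hcard := rank_nonneg.trans_lt (rank_lt_card (M := R.facetOf v))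
  rw [Int.le_sub_one_iff, mul_comm, ← Int.ediv_lt_iff_lt_mul hcard, weight_ediv_card]

lemma weight_le_level {v : Fin n →₀ ℕ} {β : ℝ} : R.weight v ≤ R.level β ↔ nu f (toR v) ≤ β := by
  rw [level, weight_le_card_mul_sub_one, Int.lt_add_one_iff, Int.le_floor, newtonWeight_cast,
    mul_le_mul_iff_right₀ R.denominator_cast_pos]

lemma weight_le_strictLevel {v : Fin n →₀ ℕ} {β : ℝ} :
    R.weight v ≤ R.strictLevel β ↔ nu f (toR v) < β := by
  rw [strictLevel, weight_le_card_mul_sub_one, Int.lt_ceil, newtonWeight_cast,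
    mul_lt_mul_iff_right₀ R.denominator_cast_pos]

lemma filtration_level (β : ℝ) : R.filtration (R.level β) = Nle f β :=
  Submodule.ext fun _ => mem_filtration.trans (forall₂_congr fun _ _ => weight_le_level)

lemma filtration_strictLevel (β : ℝ) : R.filtration (R.strictLevel β) = Nlt f β :=
  Submodule.ext fun _ => mem_filtration.trans (forall₂_congr fun _ _ => weight_le_strictLevel)

lemma level_add_neg_one (β : ℝ) : R.level (β + -1) = R.level β + -R.shift := by
  rw [level, level, shift, mul_add (R.denominator : ℝ), mul_neg_one, ← sub_eq_add_neg,
    Int.floor_sub_natCast]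
  ring

lemma strictLevel_add_neg_one (β : ℝ) : R.strictLevel (β + -1) = R.strictLevel β + -R.shift := by
  rw [strictLevel, strictLevel, shift, mul_add (R.denominator : ℝ), mul_neg_one, ← sub_eq_add_neg,
    Int.ceil_sub_natCast]
  ring

lemma strictLevel_le_level (β : ℝ) : R.strictLevel β ≤ R.level β :=
  sub_le_sub_right (mul_le_mul_of_nonneg_left (Int.ceil_le_floor_add_one _)
    (Int.natCast_nonneg _)) 1

lemma finrank_filtration_level (β : ℝ) : finrank ℂ (R.filtration (R.level β)) =
    finrank ℂ (R.filtration (R.strictLevel β)) + latticeCount f β := by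
  have hunion : {v | R.weight v ≤ R.level β} =
      {v | R.weight v ≤ R.strictLevel β} ∪ {v | nu f (toR v) = β} := by
    ext v
    simpa only [Set.mem_union, Set.mem_ofPred_eq, weight_le_level, weight_le_strictLevel]
      using le_iff_lt_or_eq
  have hfin := hunion ▸ R.finite_weight_le (R.level β)
  rw [filtration, filtration, finrank_restrictSupport, finrank_restrictSupport, latticeCount,
    hunion, Set.ncard_union_eq _ (hfin.subset Set.subset_union_left)
      (hfin.subset Set.subset_union_right)]
  exact Set.disjoint_left.mpr fun v hlt heq => (weight_le_strictLevel.mp hlt).ne heq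

end RefinedFan

theorem grDim_eq_fwdDiff_latticeCount (R : RefinedFan f) (hconv : Convenient f)
    (hnd : Nondegenerate f) (β : ℝ) :
    (grDim f β : ℤ) = (-1) ^ n * (fwdDiff (-1))^[n] (fun β => (latticeCount f β : ℤ)) β := by
  obtain ⟨c, hc, hreg⟩ := exists_linearIndependent_isWeaklyRegular
    fun M x => RefinedFan.eq_zero_of_eval_facetForm (R := R) hnd M x
  have hgr := (R.isFilteredRegular hreg).finrank_gr (fun k hk =>
    linearCombination_logDeriv_ne_zero hconv (hc.ne_zero ⟨k, hk⟩)) (R.strictLevel_le_level β)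
  rw [prefixIdeal_linearCombination_eq_LIdeal hc, R.filtration_level, R.filtration_strictLevel,
    ← fwdDiff_iter_comp_of_map_add R.level_add_neg_one,
    ← fwdDiff_iter_comp_of_map_add R.strictLevel_add_neg_one] at hgr
  refine hgr.trans (congrArg _ (sub_eq_iff_eq_add'.mpr ?_))
  simp only [R.finrank_filtration_level, Nat.cast_add]
  exact congrFun (fwdDiff_iter_add _ _ _ _) _

end HilbertFunction

/-! ### The faces in `ℱ(P)` -/

open Filter Topology in
lemma eventually_forall_nonneg_add_smul {ι : Type*} [Finite ι] {y : ι → ℝ} (hy : ∀ i, 0 < y i)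
    (z : ι → ℝ) : ∀ᶠ ε : ℝ in 𝓝[>] 0, ∀ i, 0 ≤ (y + ε • z) i := by
  refine eventually_all.mpr fun i => ?_
  have hcont : Continuous fun ε : ℝ => (y + ε • z) i := by
    simp only [Pi.add_apply, Pi.smul_apply, smul_eq_mul]
    fun_prop
  have hev := hcont.continuousAt (x := 0) |>.eventually_const_lt (by simpa using hy i)
  exact (hev.filter_mono nhdsWithin_le_nhds).mono fun _ => le_of_lt

lemma sum_toR_pos {σ : Type*} {f : MvPolynomial σ ℂ} {l : (σ → ℝ) →ₗ[ℝ] ℝ} {c : ℝ} (hc : 0 < c)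
    (hl : ∀ m ∈ f.support, l (toR m) ≤ c) {y : σ → ℝ} (hyP : y ∈ newtonPolytope f)
    (hly : l y = c) (hy : ∀ k, 0 < y k) (k : σ) :
    0 < (∑ m ∈ f.support with l (toR m) = c, toR m) k := by
  rw [Finset.sum_apply]
  refine (Finset.sum_nonneg fun m _ => toR_nonneg m k).lt_of_ne fun h => (hy k).ne' ?_
  have hzero := (Finset.sum_eq_zero_iff_of_nonneg fun m _ => toR_nonneg m k).mp h.symm
  refine convexHull_min (t := {z | z k = 0}) ?_
    (convex_hyperplane (LinearMap.proj (R := ℝ) (φ := fun _ => ℝ) k).isLinear 0)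
    (mem_convexHull_support_of_apply_eq hc hl hyP hly)
  rintro _ ⟨m, hm, rfl⟩
  exact hzero m (Finset.mem_filter.mpr hm)

namespace FacetFan

variable {n : ℕ} {f : MvPolynomial (Fin n) ℂ} {D : FacetFan f}

section Simplex

variable {M : D.ι} {J : Finset (Fin n)}

lemma face_eq_convexHull_range :
    D.face M J = convexHull ℝ (Set.range fun j : J => D.vertex M j) := by
  rw [face, Set.image_eq_range]
  rfl

lemma linearIndependent_vertex_restrict :
    LinearIndependent ℝ fun j : J => D.vertex M j :=
  (linearIndependent_vertex M).comp _ Subtype.val_injective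

lemma extremePoints_face : (D.face M J).extremePoints ℝ = D.vertex M '' J := by
  rw [face_eq_convexHull_range, extremePoints_convexHull_range linearIndependent_vertex_restrict,
    Set.image_eq_range]
  rfl

lemma faceDim_face_add_one (hJ : J.Nonempty) : faceDim (D.face M J) + 1 = J.card := by
  have := hJ.to_subtype
  rw [faceDim, face_eq_convexHull_range, affineSpan_convexHull, direction_affineSpan,
    linearIndependent_vertex_restrict.affineIndependent.finrank_vectorSpan_add_one,
    Fintype.card_coe]

lemma mem_box_face_iff {x : Fin n → ℝ} : x ∈ Box (D.face M J) ↔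
    (∀ i ∈ J, 0 ≤ D.coord M i x ∧ D.coord M i x < 1) ∧ ∀ i ∉ J, D.coord M i x = 0 := by
  classical
  have hinj := (linearIndependent_vertex M).injective
  rw [Box, extremePoints_face]
  constructor
  · rintro ⟨s, hs, q, hq, rfl⟩
    obtain ⟨J', hJ', rfl⟩ := Finset.subset_set_image_iff.mp hs
    have hcoord (i : Fin n) : D.coord M i (∑ b ∈ J'.image (D.vertex M), q b • b) =
        if i ∈ J' then q (D.vertex M i) else 0 := by
      rw [Finset.sum_image hinj.injOn]
      simp [coord_vertex]
    simp only [hcoord]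
    refine ⟨fun i _ => ?_, fun i hi => if_neg fun h => hi (hJ' h)⟩
    split_ifs with hi
    · exact hq _ (Finset.mem_image_of_mem _ hi)
    · exact ⟨le_rfl, one_pos⟩
  · rintro ⟨hJ, hzero⟩
    have hdot (j : Fin n) :
        ∑ i, D.coord M i (D.vertex M j) * D.coord M i x = D.coord M j x := by
      simp [coord_vertex]
    refine ⟨J.image (D.vertex M), by simp, fun b => ∑ i, D.coord M i b * D.coord M i x, ?_, ?_⟩
    · exact Finset.forall_mem_image.mpr fun j hj => by simpa only [hdot] using hJ j hj
    · rw [Finset.sum_image hinj.injOn]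
      simp only [hdot]
      conv_lhs => rw [← sum_coord_smul_vertex M x]
      exact (Finset.sum_subset J.subset_univ fun i _ hi => by rw [hzero i hi, zero_smul]).symm

end Simplex

section Generic

variable {w : Fin n → ℝ}

open Classical in
variable (D w) in
/-- The indices of the facet `M` in whose direction `w` has positive coordinate. For generic `w`,
the faces of `M` containing all these vertices are exactly the elements of `ℱ(P)` attributed
to `M`. -/
noncomputable def positiveIndices (M : D.ι) : Finset (Fin n) := {i | 0 < D.coord M i w}

lemma mem_positiveIndices {M : D.ι} {i : Fin n} :
    i ∈ D.positiveIndices w M ↔ 0 < D.coord M i w := by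
  simp [positiveIndices]

lemma mem_sector_neg_iff {M : D.ι} {v : Fin n → ℝ} : v ∈ D.sector (-w) M ↔
    v ∈ D.cone M ∧ ∀ i ∈ D.positiveIndices w M, 0 < D.coord M i v := by
  simp only [sector, mem_positiveIndices, map_neg, Left.neg_neg_iff, Set.mem_ofPred_eq]

open Filter Topology in
lemma pos_of_mem_sector_neg (hw : ∀ k, 0 < w k) {M : D.ι} {v : Fin n → ℝ}
    (hv : v ∈ D.sector (-w) M) (k : Fin n) : 0 < v k := by
  obtain ⟨ε, hcone, hε⟩ :=
    ((eventually_mem_cone_of_mem_sector hv).and self_mem_nhdsWithin).exists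
  have hk : 0 ≤ v k + ε * -w k := nonneg_of_mem_cone hcone k
  linarith [mul_pos hε (hw k)]

lemma positiveIndices_nonempty (hn : 1 ≤ n) (hw : ∀ k, 0 < w k) (M : D.ι) :
    (D.positiveIndices w M).Nonempty := by
  refine Finset.nonempty_iff_ne_empty.mpr fun hempty => ?_
  have hzero : (0 : Fin n → ℝ) ∈ D.sector (-w) M :=
    mem_sector_neg_iff.mpr ⟨Submodule.zero_mem _, by simp [hempty]⟩
  exact lt_irrefl _ (pos_of_mem_sector_neg hw hzero ⟨0, hn⟩)

variable {M : D.ι} {J : Finset (Fin n)}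

lemma exists_mem_face_mem_sector_neg (hJ : J.Nonempty) (hwJ : D.positiveIndices w M ⊆ J) :
    ∃ z ∈ D.face M J, z ∈ D.sector (-w) M := by
  have hcard : (0 : ℝ) < J.card := Nat.cast_pos.mpr hJ.card_pos
  have hcoord (i : Fin n) : D.coord M i (∑ j ∈ J, (J.card : ℝ)⁻¹ • D.vertex M j) =
      if i ∈ J then (J.card : ℝ)⁻¹ else 0 := by
    simp [coord_vertex]
  refine ⟨∑ j ∈ J, (J.card : ℝ)⁻¹ • D.vertex M j, ?_, mem_sector_neg_iff.mpr ⟨fun i => ?_, ?_⟩⟩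
  · refine (convex_convexHull ℝ _).sum_mem (fun _ _ => by positivity) ?_ fun j => vertex_mem_face
    rw [Finset.sum_const, nsmul_eq_mul, mul_inv_cancel₀ hcard.ne']
  · refine (?_ : (0 : ℝ) ≤ _).trans_eq (hcoord i).symm
    split_ifs <;> positivity
  · intro i hi
    rw [hcoord, if_pos (hwJ hi)]
    positivity

lemma face_subset_cone : D.face M J ⊆ D.cone M := by
  refine convexHull_min (Set.image_subset_iff.mpr fun j _ => ?_) (D.cone M).toConvexCone.convex
  exact vertex_mem_cone_of_functional_eq (functional_vertex M j)

lemma fcalMem_face (hn : 1 ≤ n) (hw : ∀ k, 0 < w k) (hwJ : D.positiveIndices w M ⊆ J) :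
    FcalMem f (D.face M J) := by
  have hJ := (positiveIndices_nonempty hn hw M).mono hwJ
  obtain ⟨z, hz, hzw⟩ := exists_mem_face_mem_sector_neg hJ hwJ
  refine ⟨isFace_face hJ, fun hsub => ?_⟩
  obtain ⟨k, hk⟩ := Set.mem_iUnion.mp (hsub hz)
  exact (pos_of_mem_sector_neg hw hzw k).ne' hk

lemma IsGeneric.face_injective (hn : 1 ≤ n) (hw : D.IsGeneric w) {M' : D.ι} {J' : Finset (Fin n)}
    (hJ : D.positiveIndices w M ⊆ J) (hJ' : D.positiveIndices w M' ⊆ J')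
    (h : D.face M J = D.face M' J') : M = M' ∧ J = J' := by
  obtain ⟨z, hz, hzw⟩ :=
    exists_mem_face_mem_sector_neg ((positiveIndices_nonempty hn hw.pos M).mono hJ) hJ
  obtain ⟨z', hz', hzw'⟩ :=
    exists_mem_face_mem_sector_neg ((positiveIndices_nonempty hn hw.pos M').mono hJ') hJ'
  have hle := functional_le_of_mem_sector hzw (face_subset_cone (h ▸ hz))
  have hle' := functional_le_of_mem_sector hzw' (face_subset_cone (h.symm ▸ hz'))
  simp only [map_neg, neg_le_neg_iff] at hle hle'
  obtain rfl : M = M' := hw.injective (le_antisymm hle hle')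
  refine ⟨rfl, Finset.coe_injective ((linearIndependent_vertex M).injective.image_injective ?_)⟩
  rw [← extremePoints_face, ← extremePoints_face, h]

end Generic

section Surjectivity

variable {l : (Fin n → ℝ) →ₗ[ℝ] ℝ} {c : ℝ} {M : D.ι} {x : Fin n → ℝ}

lemma coord_mul_apply_vertex_le (hl : ∀ z ∈ newtonPolytope f, l z ≤ c) (hx : x ∈ D.cone M)
    (i : Fin n) : D.coord M i x * l (D.vertex M i) ≤ D.coord M i x * c :=
  mul_le_mul_of_nonneg_left (hl _ (vertex_mem_newtonPolytope M i)) (hx i)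

lemma apply_eq_sum (M : D.ι) (x : Fin n → ℝ) :
    l x = ∑ i, D.coord M i x * l (D.vertex M i) := by
  conv_lhs => rw [← sum_coord_smul_vertex M x]
  simp only [map_sum, map_smul, smul_eq_mul]

lemma apply_le_functional_mul (hl : ∀ z ∈ newtonPolytope f, l z ≤ c) (hx : x ∈ D.cone M) :
    l x ≤ D.functional M x * c := by
  rw [apply_eq_sum M, functional_eq_sum, Finset.sum_mul]
  exact Finset.sum_le_sum fun i _ => coord_mul_apply_vertex_le hl hx i

lemma apply_vertex_eq (hl : ∀ z ∈ newtonPolytope f, l z ≤ c) (hx : x ∈ D.cone M)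
    (heq : l x = D.functional M x * c) {i : Fin n} (hi : 0 < D.coord M i x) :
    l (D.vertex M i) = c := by
  rw [apply_eq_sum M, functional_eq_sum, Finset.sum_mul,
    Finset.sum_eq_sum_iff_of_le fun i _ => coord_mul_apply_vertex_le hl hx i] at heq
  exact mul_left_cancel₀ hi.ne' (heq i (Finset.mem_univ i))

lemma faceDim_newtonPolytope (D : FacetFan f) : faceDim (newtonPolytope f) = n := by
  obtain ⟨M, -⟩ := D.cover 0 fun _ => le_rfl
  have htop : (affineSpan ℝ (newtonPolytope f)).direction = ⊤ := by
    rw [eq_top_iff, ← (D.basis M).span_eq, Submodule.span_le]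
    rintro _ ⟨i, rfl⟩
    simpa [vertex] using AffineSubspace.vsub_mem_direction
      (subset_affineSpan ℝ _ (vertex_mem_newtonPolytope M i))
      (subset_affineSpan ℝ _ zero_mem_newtonPolytope)
  rw [faceDim, htop, finrank_top, Module.finrank_fin_fun]

lemma pos_of_faceDim_lt (D : FacetFan f) (hl : ∀ z ∈ newtonPolytope f, l z ≤ c) {y : Fin n → ℝ}
    (hy : ∀ k, 0 < y k) (hly : l y = c) (hdim : faceDim {z ∈ newtonPolytope f | l z = c} < n) :
    0 < c := by
  have hc : 0 ≤ c := (map_zero l).symm.trans_le (hl 0 zero_mem_newtonPolytope)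
  refine hc.lt_of_ne' fun hzero => ?_
  rw [hzero] at hl hly
  have hnonpos (z : Fin n → ℝ) : l z ≤ 0 := by
    obtain ⟨ε, hε, hpos⟩ :=
      ((eventually_forall_nonneg_add_smul hy z).and self_mem_nhdsWithin).exists
    obtain ⟨M, hM⟩ := D.cover _ hε
    have hle := apply_le_functional_mul hl (M := M) hM
    rw [map_add, hly, map_smul, smul_eq_mul, mul_zero, zero_add] at hle
    exact nonpos_of_mul_nonpos_right hle hpos
  have hker (z : Fin n → ℝ) : l z = c :=
    hzero ▸ le_antisymm (hnonpos z) (by simpa using hnonpos (-z))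
  simp only [hker, and_true, Set.ofPred_mem_eq] at hdim
  exact hdim.ne (faceDim_newtonPolytope D)

lemma functional_toR_eq_one (hc : 0 < c) (hl : ∀ z ∈ newtonPolytope f, l z ≤ c)
    (hM : ∑ m ∈ f.support with l (toR m) = c, toR m ∈ D.cone M) {m : Fin n →₀ ℕ}
    (hm : m ∈ f.support) (hlm : l (toR m) = c) : D.functional M (toR m) = 1 := by
  have hle := apply_le_functional_mul hl hM
  simp only [map_sum] at hle
  rw [Finset.sum_congr rfl fun m hm => (Finset.mem_filter.mp hm).2, Finset.sum_const,
    nsmul_eq_mul, mul_le_mul_iff_left₀ hc, ← nsmul_one, ← Finset.sum_const] at hle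
  have hle_one (m) (hm : m ∈ f.support.filter fun m => l (toR m) = c) :=
    functional_toR_le_one M (Finset.mem_filter.mp hm).1
  exact (Finset.sum_eq_sum_iff_of_le hle_one).mp
    ((Finset.sum_le_sum hle_one).antisymm hle) m (Finset.mem_filter.mpr ⟨hm, hlm⟩)

open Classical in
lemma setOf_apply_eq_eq_face (hc : 0 < c) (hl : ∀ z ∈ newtonPolytope f, l z ≤ c)
    (hM : ∀ m ∈ f.support, l (toR m) = c → D.functional M (toR m) = 1) :
    {z ∈ newtonPolytope f | l z = c} = D.face M {i | l (D.vertex M i) = c} := by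
  refine Set.Subset.antisymm (fun z hz => ?_) fun z hz => ⟨face_subset_newtonPolytope hz,
    apply_eq_of_mem_face (fun j hj => (Finset.mem_filter.mp hj).2) hz⟩
  refine convexHull_min ?_ (convex_convexHull ℝ _) (mem_convexHull_support_of_apply_eq hc
    (fun m hm => hl _ (toR_mem_newtonPolytope hm)) hz.1 hz.2)
  rintro _ ⟨m, ⟨hm, hlm⟩, rfl⟩
  have hone := hM m hm hlm
  have hcone := toR_mem_cone hm hone
  refine mem_face_of_mem_cone hcone hone fun i hi => ?_
  by_contra hne
  refine hi (Finset.mem_filter.mpr ⟨Finset.mem_univ i, apply_vertex_eq hl hcone ?_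
    ((mem_cone.mp hcone i).lt_of_ne' hne)⟩)
  rw [hlm, hone, one_mul]

/- The facet is the one whose cone contains `x - ε w` for small `ε > 0`, where `x` is the sum of the
support points on `Δ`. -/
theorem exists_eq_face (D : FacetFan f) (w : Fin n → ℝ) {Δ : Set (Fin n → ℝ)} (hΔ : FcalMem f Δ)
    (hdim : faceDim Δ < n) : ∃ M J, D.positiveIndices w M ⊆ J ∧ Δ = D.face M J := by
  classical
  obtain ⟨⟨-, l, c, hl, rfl⟩, hcoord⟩ := hΔ
  obtain ⟨y, ⟨hyP, hly⟩, hyH⟩ := Set.not_subset.mp hcoord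
  have hy (k : Fin n) : 0 < y k := (nonneg_of_mem_newtonPolytope hyP k).lt_of_ne' fun h =>
    hyH (Set.mem_iUnion.mpr ⟨k, h⟩)
  have hc := pos_of_faceDim_lt D hl hy hly hdim
  obtain ⟨M, hM⟩ := D.exists_mem_sector (eventually_forall_nonneg_add_smul
    (sum_toR_pos hc (fun m hm => hl _ (toR_mem_newtonPolytope hm)) hyP hly hy) (-w))
  rw [mem_sector_neg_iff] at hM
  have hone (m) := functional_toR_eq_one (m := m) hc hl hM.1
  refine ⟨M, _, fun i hi => ?_, setOf_apply_eq_eq_face hc hl fun m => hone m⟩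
  refine Finset.mem_filter.mpr ⟨Finset.mem_univ i, apply_vertex_eq hl hM.1 ?_ (hM.2 i hi)⟩
  simp only [map_sum, Finset.sum_mul]
  refine Finset.sum_congr rfl fun m hm => ?_
  obtain ⟨hm, hlm⟩ := Finset.mem_filter.mp hm
  rw [hlm, hone m hm hlm, one_mul]

end Surjectivity

end FacetFan

/-! ### Counting lattice points in boxes -/

lemma sum_superset_neg_one_pow_card {ι : Type*} [Fintype ι] [DecidableEq ι] (A : Finset ι) :
    ∑ J with A ⊆ J, (-1 : ℤ) ^ J.card =
      if A = Finset.univ then (-1) ^ Fintype.card ι else 0 := by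
  have h : ∑ J with A ⊆ J, (-1 : ℤ) ^ J.card =
      ∑ K ∈ Aᶜ.powerset, (-1) ^ Fintype.card ι * (-1 : ℤ) ^ K.card := by
    refine Finset.sum_nbij' compl compl (fun J hJ => ?_) (fun K hK => ?_) (fun J _ => compl_compl J)
      (fun K _ => compl_compl K) fun J _ => ?_
    · exact Finset.mem_powerset.mpr (compl_le_compl (Finset.mem_filter.mp hJ).2)
    · exact Finset.mem_filter.mpr
        ⟨Finset.mem_univ _, Finset.subset_compl_comm.mp (Finset.mem_powerset.mp hK)⟩
    · rw [← Finset.card_add_card_compl J, pow_add, mul_assoc, ← mul_pow, neg_one_mul, neg_neg,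
        one_pow, mul_one]
  rw [h, ← Finset.mul_sum, Finset.sum_powerset_neg_one_pow_card, mul_ite, mul_one, mul_zero]
  simp only [Finset.compl_eq_empty_iff]

/-- The number of lattice points of Newton weight `β` in the box of `Δ`. -/
noncomputable def boxCount {n : ℕ} (f : MvPolynomial (Fin n) ℂ) (Δ : Set (Fin n → ℝ)) (β : ℝ) :
    ℕ :=
  {v : Fin n → ℕ | natToR v ∈ Box Δ ∧ nu f (natToR v) = β}.ncard

namespace FacetFan

variable {n : ℕ} {f : MvPolynomial (Fin n) ℂ} {D : FacetFan f}

section Cone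

lemma coord_toR_add_exponent (M : D.ι) (i t : Fin n) (v : Fin n →₀ ℕ) :
    D.coord M i (toR (v + D.exponent M t)) = D.coord M i (toR v) + if t = i then 1 else 0 := by
  rw [toR_add, ← vertex_eq_toR, map_add, coord_vertex]

lemma functional_toR_add_exponent (M : D.ι) (t : Fin n) (v : Fin n →₀ ℕ) :
    D.functional M (toR (v + D.exponent M t)) = D.functional M (toR v) + 1 := by
  rw [toR_add, ← vertex_eq_toR, map_add, functional_vertex]

lemma sub_vertex_mem_cone {M : D.ι} {t : Fin n} {x : Fin n → ℝ} (hx : x ∈ D.cone M)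
    (ht : 1 ≤ D.coord M t x) : x - D.vertex M t ∈ D.cone M := by
  refine mem_cone.mpr fun i => ?_
  rw [map_sub, coord_vertex]
  split_ifs with h
  · exact sub_nonneg.mpr (h ▸ ht)
  · exact (sub_zero (D.coord M i x)).symm ▸ mem_cone.mp hx i

lemma exponent_le {M : D.ι} {t : Fin n} {v : Fin n →₀ ℕ} (hv : toR v ∈ D.cone M)
    (ht : 1 ≤ D.coord M t (toR v)) : D.exponent M t ≤ v := fun k => by
  have hk := nonneg_of_mem_cone (sub_vertex_mem_cone hv ht) k
  rw [vertex_eq_toR] at hk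
  exact Nat.cast_le.mp (sub_nonneg.mp hk)

lemma add_exponent_mem_cone_iff {M : D.ι} {t : Fin n} {v : Fin n →₀ ℕ} :
    toR (v + D.exponent M t) ∈ D.cone M ∧ 1 ≤ D.coord M t (toR (v + D.exponent M t)) ↔
      toR v ∈ D.cone M := by
  constructor
  · rintro ⟨hv, ht⟩
    have := sub_vertex_mem_cone hv ht
    rwa [toR_add, vertex_eq_toR, add_sub_cancel_right] at this
  · intro hv
    rw [coord_toR_add_exponent, if_pos rfl, toR_add, ← vertex_eq_toR]
    exact ⟨Submodule.add_mem _ hv (vertex_mem_cone_of_functional_eq (functional_vertex M t)),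
      le_add_of_nonneg_left (mem_cone.mp hv t)⟩

variable (D) in
/-- The lattice points of Newton weight `β` in the cone over the face `D.face M J` whose
coordinates in `T` are less than `1`; it interpolates between the whole cone, for `T = ∅`, and the
box of the face, for `T = J`. -/
def latticePoints (M : D.ι) (J T : Finset (Fin n)) (β : ℝ) : Set (Fin n →₀ ℕ) :=
  {v | toR v ∈ D.cone M ∧ nu f (toR v) = β ∧ (∀ i ∉ J, D.coord M i (toR v) = 0) ∧
    ∀ i ∈ T, D.coord M i (toR v) < 1}

lemma finite_nu_eq (D : FacetFan f) (β : ℝ) : {v : Fin n →₀ ℕ | nu f (toR v) = β}.Finite :=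
  ((D.finite_nu_le β).preimage DFunLike.coe_injective.injOn).subset fun _ hv => le_of_eq hv

variable {M : D.ι} {J T : Finset (Fin n)} {t : Fin n} {β : ℝ}

lemma finite_latticePoints : (D.latticePoints M J T β).Finite :=
  (D.finite_nu_eq β).subset fun _ hv => hv.2.1

lemma mem_latticePoints_insert {v : Fin n →₀ ℕ} : v ∈ D.latticePoints M J (insert t T) β ↔
    v ∈ D.latticePoints M J T β ∧ D.coord M t (toR v) < 1 := by
  simp only [latticePoints, Set.mem_ofPred_eq, Finset.forall_mem_insert]
  tauto

lemma add_exponent_mem_latticePoints_iff (htJ : t ∈ J) (htT : t ∉ T) {v : Fin n →₀ ℕ} :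
    v + D.exponent M t ∈ D.latticePoints M J T β ∧
      1 ≤ D.coord M t (toR (v + D.exponent M t)) ↔ v ∈ D.latticePoints M J T (β + -1) := by
  have hcoord {i : Fin n} (hi : t ≠ i) :
      D.coord M i (toR (v + D.exponent M t)) = D.coord M i (toR v) := by
    rw [coord_toR_add_exponent, if_neg hi, add_zero]
  have hJ : (∀ i ∉ J, D.coord M i (toR (v + D.exponent M t)) = 0) ↔
      ∀ i ∉ J, D.coord M i (toR v) = 0 :=
    forall₂_congr fun i hi => by rw [hcoord (ne_of_mem_of_not_mem htJ hi)]
  have hT : (∀ i ∈ T, D.coord M i (toR (v + D.exponent M t)) < 1) ↔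
      ∀ i ∈ T, D.coord M i (toR v) < 1 :=
    forall₂_congr fun i hi => by rw [hcoord (ne_of_mem_of_not_mem hi htT).symm]
  have hnu (hv : toR v ∈ D.cone M) :
      nu f (toR (v + D.exponent M t)) = β ↔ nu f (toR v) = β + -1 := by
    rw [nu_eq_functional hv, nu_eq_functional (add_exponent_mem_cone_iff.mpr hv).1,
      functional_toR_add_exponent, ← sub_eq_add_neg, eq_sub_iff_add_eq]
  have hcone := add_exponent_mem_cone_iff (D := D) (M := M) (t := t) (v := v)
  simp only [latticePoints, Set.mem_ofPred_eq, hJ, hT]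
  tauto

lemma latticePoints_sdiff_insert (htJ : t ∈ J) (htT : t ∉ T) :
    D.latticePoints M J T β \ D.latticePoints M J (insert t T) β =
      (· + D.exponent M t) '' D.latticePoints M J T (β + -1) := by
  ext v
  simp only [Set.mem_sdiff, mem_latticePoints_insert, not_and, not_lt, Set.mem_image,
    ← add_exponent_mem_latticePoints_iff htJ htT]
  constructor
  · rintro ⟨hv, ht⟩
    have hle := exponent_le hv.1 (ht hv)
    refine ⟨v - D.exponent M t, ?_, tsub_add_cancel_of_le hle⟩
    rw [tsub_add_cancel_of_le hle]
    exact ⟨hv, ht hv⟩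
  · rintro ⟨u, ⟨hu, ht⟩, rfl⟩
    exact ⟨hu, fun _ => ht⟩

lemma ncard_latticePoints_insert (htJ : t ∈ J) (htT : t ∉ T) :
    ((D.latticePoints M J (insert t T) β).ncard : ℤ) =
      -fwdDiff (-1) (fun β => ((D.latticePoints M J T β).ncard : ℤ)) β := by
  have hsub : D.latticePoints M J (insert t T) β ⊆ D.latticePoints M J T β :=
    fun v hv => (mem_latticePoints_insert.mp hv).1
  have hcard := Set.ncard_sdiff_add_ncard_of_subset hsub finite_latticePoints
  rw [latticePoints_sdiff_insert htJ htT,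
    Set.ncard_image_of_injective _ (add_left_injective _)] at hcard
  rw [fwdDiff]
  lia

lemma ncard_latticePoints (hT : T ⊆ J) :
    (fun β => ((D.latticePoints M J T β).ncard : ℤ)) =
      (-1 : ℤ) ^ T.card •
        (fwdDiff (-1))^[T.card] fun β => ((D.latticePoints M J ∅ β).ncard : ℤ) := by
  induction T using Finset.induction_on with
  | empty => simp
  | insert t T ht ih =>
    obtain ⟨htJ, hTJ⟩ := Finset.insert_subset_iff.mp hT
    funext β
    rw [ncard_latticePoints_insert htJ ht, ih hTJ, fwdDiff_const_smul,
      Finset.card_insert_of_notMem ht, Function.iterate_succ_apply', pow_succ, mul_neg_one,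
      neg_smul]
    rfl

variable (D) in
/-- The number of lattice points of Newton weight `β` in the cone over the face `D.face M J`. -/
noncomputable def coneCount (M : D.ι) (J : Finset (Fin n)) (β : ℝ) : ℕ :=
  (D.latticePoints M J ∅ β).ncard

lemma boxCount_face (M : D.ι) (J : Finset (Fin n)) :
    (fun β => (boxCount f (D.face M J) β : ℤ)) =
      (-1 : ℤ) ^ J.card • (fwdDiff (-1))^[J.card] fun β => (D.coneCount M J β : ℤ) := by
  refine Eq.trans (funext fun β => congrArg Nat.cast ?_) (ncard_latticePoints subset_rfl)
  rw [boxCount, ← Set.ncard_image_of_injective _ Finsupp.equivFunOnFinite.symm.injective,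
    Equiv.image_eq_preimage_symm]
  congr 1
  ext v
  change toR v ∈ Box (D.face M J) ∧ nu f (toR v) = β ↔ v ∈ D.latticePoints M J J β
  rw [mem_box_face_iff, latticePoints, Set.mem_ofPred_eq, mem_cone]
  constructor
  · rintro ⟨⟨hJ, hJ'⟩, hnu⟩
    exact ⟨fun i => if hi : i ∈ J then (hJ i hi).1 else (hJ' i hi).ge, hnu, hJ',
      fun i hi => (hJ i hi).2⟩
  · rintro ⟨hcone, hnu, hJ', hJ⟩
    exact ⟨⟨fun i hi => ⟨hcone i, hJ i hi⟩, hJ'⟩, hnu⟩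

end Cone

section Sector

variable {w : Fin n → ℝ}

variable (D w) in
/-- The indices of the faces `D.face M J` in `ℱ(P)` of dimension less than `n`: those with
`J ⊇ D.positiveIndices w M`, each face occurring once. -/
noncomputable def faceIndices : Finset (D.ι × Finset (Fin n)) :=
  open Classical in {p | D.positiveIndices w p.1 ⊆ p.2}

lemma mem_faceIndices {p : D.ι × Finset (Fin n)} :
    p ∈ D.faceIndices w ↔ D.positiveIndices w p.1 ⊆ p.2 := by
  simp only [faceIndices, Finset.mem_filter, Finset.mem_univ, true_and]

open Classical in
lemma sum_faceIndices (F : D.ι → Finset (Fin n) → ℤ) :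
    ∑ p ∈ D.faceIndices w, F p.1 p.2 = ∑ M, ∑ J with D.positiveIndices w M ⊆ J, F M J := by
  simp only [faceIndices, Finset.sum_filter, Fintype.sum_prod_type]

lemma coneCount_eq_sum (M : D.ι) (J : Finset (Fin n)) (β : ℝ) :
    (D.coneCount M J β : ℤ) = ∑ v ∈ (D.finite_nu_eq β).toFinset,
      open Classical in
      if toR v ∈ D.cone M ∧ ∀ i ∉ J, D.coord M i (toR v) = 0 then 1 else 0 := by
  classical
  rw [Finset.sum_boole, coneCount, Set.ncard_eq_toFinset_card _ finite_latticePoints]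
  congr 2
  ext v
  simp only [latticePoints, Set.Finite.mem_toFinset, Set.mem_ofPred_eq, Finset.mem_filter,
    Finset.notMem_empty, IsEmpty.forall_iff, implies_true, and_true]
  tauto

variable {x : Fin n → ℝ}

lemma IsGeneric.positiveIndices_union_eq_univ_iff (hw : D.IsGeneric w) {M : D.ι}
    (hx : x ∈ D.cone M) :
    D.positiveIndices w M ∪ ({i | D.coord M i x ≠ 0} : Finset (Fin n)) = Finset.univ ↔
      x ∈ D.sector w M := by
  simp only [Finset.eq_univ_iff_forall, Finset.mem_union, mem_positiveIndices,
    Finset.mem_filter, Finset.mem_univ, true_and, sector, Set.mem_ofPred_eq, hx]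
  refine forall_congr' fun i => ?_
  rw [imp_iff_not_or, not_lt, (hw.coord_ne_zero M i).symm.le_iff_lt,
    (mem_cone.mp hx i).lt_iff_ne']

lemma IsGeneric.sum_neg_one_pow_card_eq_ite (hw : D.IsGeneric w) (M : D.ι) :
    ∑ J with D.positiveIndices w M ⊆ J, (-1 : ℤ) ^ J.card *
      (open Classical in if x ∈ D.cone M ∧ ∀ i ∉ J, D.coord M i x = 0 then 1 else 0) =
      open Classical in if x ∈ D.sector w M then (-1) ^ n else 0 := by
  classical
  by_cases hx : x ∈ D.cone M
  · have hA (J : Finset (Fin n)) :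
        (D.positiveIndices w M ⊆ J ∧ ∀ i ∉ J, D.coord M i x = 0) ↔
          D.positiveIndices w M ∪ ({i | D.coord M i x ≠ 0} : Finset (Fin n)) ⊆ J := by
      rw [Finset.union_subset_iff, Finset.subset_iff (s₁ := Finset.filter _ _)]
      simp only [Finset.mem_filter, Finset.mem_univ, true_and, not_imp_comm, ne_eq]
    simp only [hx, true_and, mul_ite, mul_one, mul_zero]
    rw [← Finset.sum_filter, Finset.filter_filter]
    simp only [hA, sum_superset_neg_one_pow_card, hw.positiveIndices_union_eq_univ_iff hx,
      Fintype.card_fin]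
  · have hsector : x ∉ D.sector w M := fun h => hx h.1
    simp only [hx, hsector, false_and, if_false, mul_zero, Finset.sum_const_zero]

theorem IsGeneric.sum_coneCount (hw : D.IsGeneric w) (β : ℝ) :
    ∑ p ∈ D.faceIndices w, (-1 : ℤ) ^ p.2.card * D.coneCount p.1 p.2 β =
      (-1) ^ n * latticeCount f β := by
  classical
  have hpoint (v : Fin n →₀ ℕ) : ∑ p ∈ D.faceIndices w, (-1 : ℤ) ^ p.2.card *
      (if toR v ∈ D.cone p.1 ∧ ∀ i ∉ p.2, D.coord p.1 i (toR v) = 0 then 1 else 0) = (-1) ^ n := by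
    obtain ⟨M, hM⟩ := D.exists_toR_mem_sector hw.pos v
    rw [sum_faceIndices fun M J => (-1 : ℤ) ^ J.card *
      if toR v ∈ D.cone M ∧ ∀ i ∉ J, D.coord M i (toR v) = 0 then 1 else 0]
    simp only [hw.sum_neg_one_pow_card_eq_ite]
    rw [Fintype.sum_eq_single M fun M' hne => if_neg fun h => hne (hw.eq_of_mem_sector h hM),
      if_pos hM]
  simp only [coneCount_eq_sum, Finset.mul_sum]
  rw [Finset.sum_comm]
  simp only [hpoint, Finset.sum_const, nsmul_eq_mul, latticeCount,
    Set.ncard_eq_toFinset_card _ (D.finite_nu_eq β), mul_comm]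

lemma faceDim_face_of_mem_faceIndices (hn : 1 ≤ n) (hw : ∀ k, 0 < w k)
    {p : D.ι × Finset (Fin n)} (hp : p ∈ D.faceIndices w) :
    faceDim (D.face p.1 p.2) + 1 = p.2.card :=
  faceDim_face_add_one ((positiveIndices_nonempty hn hw p.1).mono (mem_faceIndices.mp hp))

lemma finsum_fcalMem_faceDim_eq (hn : 1 ≤ n) (hw : D.IsGeneric w) {q : ℕ} (hq : q < n)
    (F : Set (Fin n → ℝ) → ℤ) :
    ∑ᶠ (Δ : Set (Fin n → ℝ)) (_ : FcalMem f Δ ∧ faceDim Δ = q), F Δ =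
      ∑ p ∈ D.faceIndices w with faceDim (D.face p.1 p.2) = q, F (D.face p.1 p.2) := by
  let face (p : D.ι × Finset (Fin n)) : Set (Fin n → ℝ) := D.face p.1 p.2
  have himage : {Δ : Set (Fin n → ℝ) | FcalMem f Δ ∧ faceDim Δ = q} =
      face '' ↑({p ∈ D.faceIndices w | faceDim (face p) = q} : Finset _) := by
    refine Set.Subset.antisymm ?_ (Set.image_subset_iff.mpr fun p hp => ?_)
    · rintro Δ ⟨hΔ, rfl⟩
      obtain ⟨M, J, hJ, rfl⟩ := D.exists_eq_face w hΔ hq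
      exact ⟨(M, J), Finset.mem_filter.mpr ⟨mem_faceIndices.mpr hJ, rfl⟩, rfl⟩
    · obtain ⟨hp, hdim⟩ := Finset.mem_filter.mp hp
      exact ⟨fcalMem_face hn hw.pos (mem_faceIndices.mp hp), hdim⟩
  have hinj : Set.InjOn face
      ↑({p ∈ D.faceIndices w | faceDim (face p) = q} : Finset _) := fun p hp p' hp' h =>
    Prod.ext_iff.mpr (hw.face_injective hn (mem_faceIndices.mp (Finset.mem_filter.mp hp).1)
      (mem_faceIndices.mp (Finset.mem_filter.mp hp').1) h)
  change ∑ᶠ Δ ∈ {Δ : Set (Fin n → ℝ) | FcalMem f Δ ∧ faceDim Δ = q}, F Δ = _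
  rw [himage, finsum_mem_image hinj, finsum_mem_coe_finset]

lemma fwdDiff_iter_boxCount_face (hn : 1 ≤ n) (hw : ∀ k, 0 < w k)
    {p : D.ι × Finset (Fin n)} (hp : p ∈ D.faceIndices w) :
    (fwdDiff (-1))^[n - 1 - faceDim (D.face p.1 p.2)]
        (fun β => (boxCount f (D.face p.1 p.2) β : ℤ)) =
      (fwdDiff (-1))^[n] ((-1 : ℤ) ^ p.2.card • fun β => (D.coneCount p.1 p.2 β : ℤ)) := by
  have hdim := faceDim_face_of_mem_faceIndices hn hw hp
  have hcard := card_finset_fin_le p.2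
  rw [boxCount_face, fwdDiff_iter_const_smul, ← Function.iterate_add_apply,
    fwdDiff_iter_const_smul]
  congr 3
  lia

theorem IsGeneric.fwdDiff_iter_latticeCount (hn : 1 ≤ n) (hw : D.IsGeneric w) (α : ℝ) :
    (-1) ^ n * (fwdDiff (-1))^[n] (fun β => (latticeCount f β : ℤ)) α =
      ∑ q ∈ Finset.range n, ∑ᶠ (Δ : Set (Fin n → ℝ)) (_ : FcalMem f Δ ∧ faceDim Δ = q),
        (fwdDiff (-1))^[n - 1 - q] (fun β => (boxCount f Δ β : ℤ)) α := by
  have hdim_mem {p : D.ι × Finset (Fin n)} (hp : p ∈ D.faceIndices w) :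
      faceDim (D.face p.1 p.2) ∈ Finset.range n :=
    Finset.mem_range.mpr ((faceDim_face_of_mem_faceIndices hn hw.pos hp).trans_le
      (card_finset_fin_le p.2))
  have hsum : ((-1 : ℤ) ^ n • fun β => (latticeCount f β : ℤ)) =
      ∑ p ∈ D.faceIndices w, (-1 : ℤ) ^ p.2.card • fun β => (D.coneCount p.1 p.2 β : ℤ) := by
    funext β
    rw [Finset.sum_apply]
    exact (hw.sum_coneCount β).symm
  calc (-1) ^ n * (fwdDiff (-1))^[n] (fun β => (latticeCount f β : ℤ)) α
    _ = (fwdDiff (-1))^[n] ((-1 : ℤ) ^ n • fun β => (latticeCount f β : ℤ)) α := by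
      rw [fwdDiff_iter_const_smul, Pi.smul_apply, smul_eq_mul]
    _ = ∑ p ∈ D.faceIndices w, (fwdDiff (-1))^[n]
          ((-1 : ℤ) ^ p.2.card • fun β => (D.coneCount p.1 p.2 β : ℤ)) α := by
      rw [hsum, fwdDiff_iter_finsetSum, Finset.sum_apply]
    _ = ∑ q ∈ Finset.range n, ∑ p ∈ D.faceIndices w with faceDim (D.face p.1 p.2) = q,
          (fwdDiff (-1))^[n - 1 - q] (fun β => (boxCount f (D.face p.1 p.2) β : ℤ)) α := by
      rw [← Finset.sum_fiberwise_of_maps_to fun p hp => hdim_mem hp]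
      refine Finset.sum_congr rfl fun q _ => Finset.sum_congr rfl fun p hp => ?_
      obtain ⟨hindex, rfl⟩ := Finset.mem_filter.mp hp
      rw [fwdDiff_iter_boxCount_face hn hw.pos hindex]
    _ = _ := Finset.sum_congr rfl fun q hq =>
      (finsum_fcalMem_faceDim_eq hn hw (Finset.mem_range.mp hq) fun Δ =>
        (fwdDiff (-1))^[n - 1 - q] (fun β => (boxCount f Δ β : ℤ)) α).symm

end Sector
end FacetFan

lemma fwdDiff_iter_boxCount {n : ℕ} (f : MvPolynomial (Fin n) ℂ) (Δ : Set (Fin n → ℝ)) {q : ℕ}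
    (hq : q < n) (α : ℝ) :
    (fwdDiff (-1))^[n - 1 - q] (fun β => (boxCount f Δ β : ℤ)) α =
      ∑ j ∈ Finset.range (n - q), (-1 : ℤ) ^ (n - 1 - q - j) * ((n - 1 - q).choose j : ℤ) *
        boxCount f Δ (α - j) := by
  rw [fwdDiff_iter_eq_sum_shift, show n - 1 - q + 1 = n - q by lia]
  simp only [smul_eq_mul, nsmul_eq_mul, mul_neg_one, ← sub_eq_add_neg]

end ToricNewton

open ToricNewton in
/-- combinatorial description of the toric Newton spectrum by counting
weighted lattice points in the boxes of the simplicial faces of `ℱ(P)`. -/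
theorem toric_newton_spectrum_box {n : ℕ} (hn : 1 ≤ n) (f : MvPolynomial (Fin n) ℂ)
    (hconv : Convenient f) (hnd : Nondegenerate f)
    (hsimp : ∀ Δ : Set (Fin n → ℝ), FcalMem f Δ → faceDim Δ ≤ n - 1 → IsSimplex Δ) :
    ∀ α : ℚ, (grDim f (α : ℝ) : ℤ) =
      ∑ q ∈ Finset.range n,
        ∑ᶠ (Δ : Set (Fin n → ℝ)) (_ : FcalMem f Δ ∧ faceDim Δ = q),
          ∑ j ∈ Finset.range (n - q),
            (-1 : ℤ) ^ (n - 1 - q - j) * ((n - 1 - q).choose j : ℤ) *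
              ({v : Fin n → ℕ | natToR v ∈ Box Δ ∧
                  nu f (natToR v) = (α : ℝ) - (j : ℝ)}.ncard : ℤ) := by
  intro α
  obtain ⟨R⟩ := exists_refinedFan hn hconv hsimp
  rw [grDim_eq_fwdDiff_latticeCount R hconv hnd, R.isGeneric.fwdDiff_iter_latticeCount hn]
  refine Finset.sum_congr rfl fun q hq => finsum_congr fun Δ => finsum_congr fun _ => ?_
  exact fwdDiff_iter_boxCount f Δ (Finset.mem_range.mp hq) α
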